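/- arXiv:2206.08314 — 3 statements merged into one kernel-verified Lean document; each statement's English description precedes it below -/
import Mathlib

section
/- Let α ∈ (0,1), let μ, ν ≥ 1 be integers with μ + ν = m, and let f be of class C^{m+α}(D). Then for every z with |z| < R, T^ν T̄^μ (∂^μ∂̄^ν f)(z) = f(z) − Σ_{j=0}^{ν−1} T^j(S(∂̄^j f))(z) − Σ_{j=0}^{μ−1} T^ν T̄^j(S̄(∂^j∂̄^ν f))(z), where T^j and T̄^j denote j-fold iterates (T^0 = identity). -/
open Complex MeasureTheory Metric ENNReal NNReal

noncomputable section

/-- Wirtinger derivative `∂`. -/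
def wD (f : ℂ → ℂ) : ℂ → ℂ := fun z =>
  (fderiv ℝ f z 1 - Complex.I * fderiv ℝ f z Complex.I) / 2

/-- Wirtinger derivative `∂̄`. -/
def wDbar (f : ℂ → ℂ) : ℂ → ℂ := fun z =>
  (fderiv ℝ f z 1 + Complex.I * fderiv ℝ f z Complex.I) / 2

/-- Iterated Wirtinger derivative `∂^i ∂̄^j`. -/
def wDij (i j : ℕ) (f : ℂ → ℂ) : ℂ → ℂ := wD^[i] (wDbar^[j] f)

/-- α-Hölder constant of `f` on `A`, valued in `ℝ≥0∞`. -/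
def Hol (α : ℝ) (A : Set ℂ) (f : ℂ → ℂ) : ℝ≥0∞ :=
  ⨆ z ∈ A, ⨆ z' ∈ A, ⨆ _ : z ≠ z', (‖f z - f z'‖₊ : ℝ≥0∞) / (‖z - z'‖₊ : ℝ≥0∞) ^ α

/-- `f` is of class `C^{k+α}(D)`, `D` the closed disk of radius `R`. -/
def CkHolder (k : ℕ) (α R : ℝ) (f : ℂ → ℂ) : Prop :=
  (∃ U : Set ℂ, IsOpen U ∧ closedBall (0:ℂ) R ⊆ U ∧ ContDiffOn ℝ k f U) ∧
  ∀ i j : ℕ, i + j = k → Hol α (closedBall (0:ℂ) R) (wDij i j f) < ⊤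

/-- The norm `‖f‖ = sup_D |f| + (2R)^α H_α[f]`. -/
def hnorm (α R : ℝ) (f : ℂ → ℂ) : ℝ≥0∞ :=
  (⨆ z ∈ closedBall (0:ℂ) R, (‖f z‖₊ : ℝ≥0∞)) +
    ENNReal.ofReal ((2*R) ^ α) * Hol α (closedBall (0:ℂ) R) f

/-- The norm `‖f‖^{(k)} = max_{i+j=k} ‖∂^i∂̄^j f‖`. -/
def hnormK (k : ℕ) (α R : ℝ) (f : ℂ → ℂ) : ℝ≥0∞ :=
  ⨆ p ∈ Finset.HasAntidiagonal.antidiagonal k, hnorm α R (wDij p.1 p.2 f)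

/-- `C_0^{k+α}(D)`: members of `C^{k+α}(D)` all of whose derivatives of order `≤ k-1`
vanish at the origin. -/
def C0kHolder (k : ℕ) (α R : ℝ) (f : ℂ → ℂ) : Prop :=
  CkHolder k α R f ∧ ∀ i j : ℕ, i + j < k → wDij i j f 0 = 0

/-- The Cauchy–Green operator `T`. -/
def Tcg (R : ℝ) (g : ℂ → ℂ) : ℂ → ℂ := fun z =>
  -(Real.pi : ℂ)⁻¹ * ∫ ζ in closedBall (0:ℂ) R, g ζ / (ζ - z)

/-- The operator `T̄ g = conj (T (conj g))`. -/
def Tcgbar (R : ℝ) (g : ℂ → ℂ) : ℂ → ℂ := fun z =>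
  (starRingEnd ℂ) (Tcg R (fun w => (starRingEnd ℂ) (g w)) z)

/-- The Cauchy integral `S`. -/
def Scau (R : ℝ) (f : ℂ → ℂ) : ℂ → ℂ := fun z =>
  (2 * Real.pi * Complex.I)⁻¹ * ∮ ζ in C(0, R), f ζ / (ζ - z)

/-- The operator `S̄ f = conj (S (conj f))`. -/
def Scaubar (R : ℝ) (f : ℂ → ℂ) : ℂ → ℂ := fun z =>
  (starRingEnd ℂ) (Scau R (fun w => (starRingEnd ℂ) (f w)) z)

/-- The boundary operator `S_b`. -/
def Sb (R : ℝ) (f : ℂ → ℂ) : ℂ → ℂ := fun z =>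
  (2 * Real.pi * Complex.I)⁻¹ *
    ∫ θ in (0:ℝ)..(2 * Real.pi),
      f (R * Complex.exp (Complex.I * θ)) / (R * Complex.exp (Complex.I * θ) - z) *
        (-Complex.I * R * Complex.exp (-Complex.I * θ))

/-- The Taylor polynomial `P_k(ζ, z)` of `f` at `z` of degree `k`. -/
def TaylorP (k : ℕ) (f : ℂ → ℂ) (ζ z : ℂ) : ℂ :=
  ∑ l ∈ Finset.range (k+1), ((Nat.factorial l : ℂ))⁻¹ *
    ∑ p ∈ Finset.HasAntidiagonal.antidiagonal l,
      wDij p.1 p.2 f z * (ζ - z) ^ p.1 * ((starRingEnd ℂ) ζ - (starRingEnd ℂ) z) ^ p.2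

/-- The operator `^{k+2}T`. -/
def TkOp (k : ℕ) (R : ℝ) (f : ℂ → ℂ) : ℂ → ℂ := fun z =>
  -((Nat.factorial (k+1) : ℂ) / (Real.pi : ℂ)) *
    ∫ ζ in closedBall (0:ℂ) R, (f ζ - TaylorP k f ζ z) / (ζ - z) ^ (k + 2)

end

/-!
Stokes' theorem on a disk, in the form `∮ F = 2i ∫ ∂̄F`, tolerates a countable set where `F` is only
continuous. If `∂̄f` vanishes at `z`, then the divided difference `(f ζ - f z) / (ζ - z)` extends
continuously to `z` and its `∂̄` is the integrable function `∂̄f ζ / (ζ - z)`, so Stokes' theorem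
gives `f z = S f z + T (∂̄f) z`. The general case reduces to this one by subtracting from `f` the
multiple `∂̄f z • u` of the function `u ζ = χ ζ • conj (ζ - z)`, with `χ` a bump function at `z`:
`u` is odd about `z`, hence `∂̄u` is even, and `T (∂̄u) z = 0` by reflection in `z`.

The formula is iterated by applying it to the successive `∂̄`-derivatives, and conjugation turns it
into the formula for `∂`, `T̄` and `S̄`. The boundary terms need not extend continuously to the
closed disk, so the linearity of `T` is used on `L^∞`, which `T` preserves.
-/

open scoped ComplexConjugate Real Topology

theorem fderiv_eq_wD_mul_add_wDbar_mul_conj (f : ℂ → ℂ) (z v : ℂ) :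
    fderiv ℝ f z v = wD f z * v + wDbar f z * conj v := by
  have hv : fderiv ℝ f z v = v.re * fderiv ℝ f z 1 + v.im * fderiv ℝ f z I := by
    conv_lhs => rw [show v = v.re • (1 : ℂ) + v.im • I by simp [re_add_im]]
    rw [map_add, map_smul, map_smul, real_smul, real_smul]
  have hconj : conj v = v.re - v.im * I := by
    simp [Complex.ext_iff]
  rw [hv, hconj, wD, wDbar]
  nth_rewrite 3 [← re_add_im v]
  linear_combination (v.im * fderiv ℝ f z I) * I_mul_I

theorem differentiableAt_complex_iff_wDbar_eq_zero {f : ℂ → ℂ} {z : ℂ} :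
    DifferentiableAt ℂ f z ↔ DifferentiableAt ℝ f z ∧ wDbar f z = 0 := by
  rw [differentiableAt_complex_iff_differentiableAt_real, wDbar, smul_eq_mul,
    _root_.div_eq_zero_iff, or_iff_left two_ne_zero]
  refine and_congr_right fun _ => ⟨fun h => ?_, fun h => ?_⟩
  · linear_combination I * h + fderiv ℝ f z 1 * I_mul_I
  · linear_combination -I * h + fderiv ℝ f z I * I_mul_I

theorem wDbar_eq_of_eventuallyEq {f g : ℂ → ℂ} {z : ℂ} (hfg : f =ᶠ[𝓝 z] g) :
    wDbar f z = wDbar g z := by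
  simp only [wDbar, hfg.fderiv_eq]

theorem support_wDbar_subset_tsupport (f : ℂ → ℂ) : Function.support (wDbar f) ⊆ tsupport f := by
  refine fun z hz => support_fderiv_subset ℝ fun hfz => hz ?_
  simp [wDbar, hfz]

theorem wDbar_sub {f g : ℂ → ℂ} {z : ℂ} (hf : DifferentiableAt ℝ f z)
    (hg : DifferentiableAt ℝ g z) : wDbar (f - g) z = wDbar f z - wDbar g z := by
  simp only [wDbar, fderiv_sub hf hg, _root_.sub_apply]
  ring

theorem wDbar_mul {f g : ℂ → ℂ} {z : ℂ} (hf : DifferentiableAt ℝ f z)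
    (hg : DifferentiableAt ℝ g z) :
    wDbar (f * g) z = f z * wDbar g z + g z * wDbar f z := by
  simp only [wDbar, fderiv_mul hf hg, _root_.add_apply, _root_.smul_apply, smul_eq_mul]
  ring

theorem wDbar_const_smul (c : ℂ) (f : ℂ → ℂ) : wDbar (c • f) = c • wDbar f := by
  funext z
  simp only [wDbar, fderiv_const_smul_field, Pi.smul_apply, _root_.smul_apply, smul_eq_mul]
  ring

theorem semiconj_star_wD_wDbar : Function.Semiconj star wD wDbar := fun f => by
  funext z
  have h : fderiv ℝ (star f) z = conjCLE.toContinuousLinearMap.comp (fderiv ℝ f z) :=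
    conjCLE.comp_fderiv
  simp [wD, wDbar, h]

theorem contDiffOn_wDbar {f : ℂ → ℂ} {U : Set ℂ} {n : ℕ} (hU : IsOpen U)
    (hf : ContDiffOn ℝ (n + 1 : ℕ) f U) : ContDiffOn ℝ n (wDbar f) U := by
  have hfderiv : ContDiffOn ℝ n (fderiv ℝ f) U := hf.fderiv_of_isOpen hU (by norm_cast)
  exact ((hfderiv.clm_apply contDiffOn_const).add
    (contDiffOn_const.mul (hfderiv.clm_apply contDiffOn_const))).div_const 2

theorem contDiffOn_iterate_wDbar {f : ℂ → ℂ} {U : Set ℂ} {n k : ℕ} (hU : IsOpen U)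
    (hf : ContDiffOn ℝ (n + k : ℕ) f U) : ContDiffOn ℝ n (wDbar^[k] f) U := by
  induction k generalizing f with
  | zero => exact hf
  | succ k ih => exact ih (contDiffOn_wDbar hU hf)

theorem contDiffOn_star {f : ℂ → ℂ} {U : Set ℂ} {n : WithTop ℕ∞} (hf : ContDiffOn ℝ n f U) :
    ContDiffOn ℝ n (star f) U :=
  conjCLE.contDiff.comp_contDiffOn hf

theorem contDiffOn_iterate_wD {f : ℂ → ℂ} {U : Set ℂ} {n k : ℕ} (hU : IsOpen U)
    (hf : ContDiffOn ℝ (n + k : ℕ) f U) : ContDiffOn ℝ n (wD^[k] f) U := by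
  have hstar : ContDiffOn ℝ n (star (wD^[k] f)) U := by
    rw [semiconj_star_wD_wDbar.iterate_right k f]
    exact contDiffOn_iterate_wDbar hU (contDiffOn_star hf)
  exact star_star (wD^[k] f) ▸ contDiffOn_star hstar

section PolarCoordinates

theorem add_polarCoord_symm_eq_circleMap (c : ℂ) (p : ℝ × ℝ) :
    c + Complex.polarCoord.symm p = circleMap c p.1 p.2 := by
  simp [Complex.polarCoord_symm_apply, circleMap, exp_mul_I]

variable {E : Type*} [NormedAddCommGroup E] [NormedSpace ℝ E]

theorem integrableOn_comp_polarCoord_symm_iff {f : ℂ → E} :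
    IntegrableOn (fun p : ℝ × ℝ => p.1 • f (Complex.polarCoord.symm p)) polarCoord.target ↔
      Integrable f := by
  have hpos : Set.EqOn (fun p : ℝ × ℝ => p.1 • f (Complex.polarCoord.symm p))
      (fun p => |(fderivPolarCoordSymm p).det| •
        (f ∘ measurableEquivRealProd.symm) (polarCoord.symm p)) polarCoord.target := by
    intro p hp
    simp only [det_fderivPolarCoordSymm, abs_of_pos (show 0 < p.1 from hp.1), Function.comp_apply,
      measurableEquivRealProd_symm_polarCoord_symm_apply]
  rw [integrableOn_congr_fun hpos polarCoord.open_target.measurableSet,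
    ← integrableOn_image_iff_integrableOn_abs_det_fderiv_smul volume
      polarCoord.open_target.measurableSet
      (fun p _ => (hasFDerivAt_polarCoord_symm p).hasFDerivWithinAt) polarCoord.symm.injOn,
    polarCoord.symm_image_target_eq_source,
    integrableOn_congr_set_ae polarCoord_source_ae_eq_univ, integrableOn_univ,
    volume_preserving_equiv_real_prod.symm.integrable_comp_emb
      measurableEquivRealProd.symm.measurableEmbedding]

theorem polarCoord_target_inter_ae_eq_Icc (R : ℝ) :
    (polarCoord.target ∩ {p | p.1 ≤ R} : Set (ℝ × ℝ)) =ᵐ[volume]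
      Set.Icc ((0 : ℝ), -π) (R, π) := by
  have hprod : polarCoord.target ∩ {p | p.1 ≤ R} = Set.Ioc 0 R ×ˢ Set.Ioo (-π) π := by
    ext p
    simp only [polarCoord_target, Set.mem_inter_iff, Set.mem_prod, Set.mem_Ioi, Set.mem_ofPred_eq,
      Set.mem_Ioc]
    tauto
  rw [hprod, ← Set.Icc_prod_Icc]
  exact Measure.set_prod_ae_eq Ioc_ae_eq_Icc Ioo_ae_eq_Icc

theorem smul_indicator_closedBall_polarCoord_symm (c : ℂ) (R : ℝ) (f : ℂ → E) :
    Set.EqOn (fun p => p.1 • (closedBall c R).indicator f (c + Complex.polarCoord.symm p))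
      ({p | p.1 ≤ R}.indicator fun p => p.1 • f (circleMap c p.1 p.2)) polarCoord.target := by
  intro p hp
  have hmem : circleMap c p.1 p.2 ∈ closedBall c R ↔ p.1 ≤ R := by
    rw [← add_polarCoord_symm_eq_circleMap, mem_closedBall, dist_self_add_left,
      norm_polarCoord_symm, abs_of_pos (show 0 < p.1 from hp.1)]
  by_cases h : p.1 ≤ R <;> simp only [add_polarCoord_symm_eq_circleMap, Set.indicator, hmem,
    Set.mem_ofPred_eq, h, if_true, if_false, smul_zero]

theorem setIntegral_closedBall_eq_setIntegral_circleMap (c : ℂ) (R : ℝ) (f : ℂ → E) :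
    ∫ ζ in closedBall c R, f ζ =
      ∫ p in Set.Icc ((0 : ℝ), -π) (R, π), p.1 • f (circleMap c p.1 p.2) := by
  rw [← integral_indicator measurableSet_closedBall, ← integral_add_left_eq_self _ c,
    ← Complex.integral_comp_polarCoord_symm,
    setIntegral_congr_fun polarCoord.open_target.measurableSet
      (smul_indicator_closedBall_polarCoord_symm c R f),
    setIntegral_indicator (measurableSet_le measurable_fst measurable_const),
    setIntegral_congr_set (polarCoord_target_inter_ae_eq_Icc R)]

theorem integrableOn_closedBall_iff_integrableOn_circleMap {c : ℂ} {R : ℝ} {f : ℂ → E} :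
    IntegrableOn f (closedBall c R) ↔
      IntegrableOn (fun p : ℝ × ℝ => p.1 • f (circleMap c p.1 p.2))
        (Set.Icc ((0 : ℝ), -π) (R, π)) := by
  rw [← integrable_indicator_iff measurableSet_closedBall,
    ← (measurePreserving_add_left volume c).integrable_comp_emb (measurableEmbedding_addLeft c),
    ← integrableOn_comp_polarCoord_symm_iff]
  simp only [Function.comp_apply]
  rw [integrableOn_congr_fun (smul_indicator_closedBall_polarCoord_symm c R f)
      polarCoord.open_target.measurableSet,
    integrableOn_indicator_iff (measurableSet_le measurable_fst measurable_const), Set.inter_comm,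
    integrableOn_congr_set_ae (polarCoord_target_inter_ae_eq_Icc R)]

end PolarCoordinates

theorem hasFDerivAt_cexp_snd_mul_I (p : ℝ × ℝ) :
    HasFDerivAt (fun q : ℝ × ℝ => cexp (q.2 * I))
      ((cexp (p.2 * I) * I) • ofRealCLM.comp (.snd ℝ ℝ ℝ)) p := by
  rw [mul_smul]
  exact ((ofRealCLM.comp (.snd ℝ ℝ ℝ)).hasFDerivAt.mul_const I).cexp

theorem hasFDerivAt_circleMap (c : ℂ) (p : ℝ × ℝ) :
    HasFDerivAt (fun q : ℝ × ℝ => circleMap c q.1 q.2)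
      ((circleMap 0 p.1 p.2 * I) • ofRealCLM.comp (.snd ℝ ℝ ℝ) +
        cexp (p.2 * I) • ofRealCLM.comp (.fst ℝ ℝ ℝ)) p := by
  have h := ((ofRealCLM.comp (.fst ℝ ℝ ℝ)).hasFDerivAt (x := p)).mul
    (hasFDerivAt_cexp_snd_mul_I p)
  rw [circleMap_zero, mul_assoc, mul_smul]
  exact h.const_add c

theorem circleIntegral_eq_integral_neg_pi_pi (f : ℂ → ℂ) (c : ℂ) (R : ℝ) :
    ∮ ζ in C(c, R), f ζ = ∫ θ in -π..π, circleMap 0 R θ * I * f (circleMap c R θ) := by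
  have hper : Function.Periodic (fun θ => circleMap 0 R θ * I * f (circleMap c R θ)) (2 * π) :=
    ((periodic_circleMap 0 R).mul fun _ => rfl).mul ((periodic_circleMap c R).comp f)
  have h := hper.intervalIntegral_add_eq 0 (-π)
  rw [zero_add, show -π + 2 * π = π by ring] at h
  simp only [circleIntegral, deriv_circleMap, smul_eq_mul, h]

/-- Radial component of the vector field on the `(r, θ)`-plane whose flux is the pull-back of the
one-form `f dζ` under `(r, θ) ↦ c + r e^{iθ}`. -/
noncomputable def radialFlux (f : ℂ → ℂ) (c : ℂ) (p : ℝ × ℝ) : ℂ :=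
  circleMap 0 p.1 p.2 * I * f (circleMap c p.1 p.2)

/-- Angular component of the vector field on the `(r, θ)`-plane whose flux is the pull-back of the
one-form `f dζ` under `(r, θ) ↦ c + r e^{iθ}`. -/
noncomputable def angularFlux (f : ℂ → ℂ) (c : ℂ) (p : ℝ × ℝ) : ℂ :=
  -(cexp (p.2 * I) * f (circleMap c p.1 p.2))

section PolarFlux

variable {f : ℂ → ℂ} {c : ℂ} {R : ℝ} {p : ℝ × ℝ}

theorem differentiableAt_radialFlux (hf : DifferentiableAt ℝ f (circleMap c p.1 p.2)) :
    DifferentiableAt ℝ (radialFlux f c) p :=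
  ((hasFDerivAt_circleMap 0 p).differentiableAt.mul_const I).mul
    (hf.comp p (hasFDerivAt_circleMap c p).differentiableAt)

theorem differentiableAt_angularFlux (hf : DifferentiableAt ℝ f (circleMap c p.1 p.2)) :
    DifferentiableAt ℝ (angularFlux f c) p :=
  ((hasFDerivAt_cexp_snd_mul_I p).differentiableAt.mul
    (hf.comp p (hasFDerivAt_circleMap c p).differentiableAt)).neg

theorem fderiv_radialFlux_one_zero (hf : DifferentiableAt ℝ f (circleMap c p.1 p.2)) :
    fderiv ℝ (radialFlux f c) p (1, 0) =
      cexp (p.2 * I) * I * f (circleMap c p.1 p.2) +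
        circleMap 0 p.1 p.2 * I * fderiv ℝ f (circleMap c p.1 p.2) (cexp (p.2 * I)) := by
  have h : HasFDerivAt (radialFlux f c) _ p := ((hasFDerivAt_circleMap 0 p).mul_const I).mul
    (hf.hasFDerivAt.comp p (hasFDerivAt_circleMap c p))
  rw [h.fderiv]
  simp only [ContinuousLinearMap.comp_add, _root_.add_apply, _root_.smul_apply,
    ContinuousLinearMap.comp_apply, ContinuousLinearMap.coe_fst', ContinuousLinearMap.coe_snd',
    ofRealCLM_apply, Complex.ofReal_one, smul_eq_mul, mul_zero, mul_one, map_zero, zero_add]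
  ring

theorem fderiv_angularFlux_zero_one (hf : DifferentiableAt ℝ f (circleMap c p.1 p.2)) :
    fderiv ℝ (angularFlux f c) p (0, 1) =
      -(cexp (p.2 * I) * I * f (circleMap c p.1 p.2) +
        cexp (p.2 * I) * fderiv ℝ f (circleMap c p.1 p.2) (circleMap 0 p.1 p.2 * I)) := by
  have h : HasFDerivAt (angularFlux f c) _ p := ((hasFDerivAt_cexp_snd_mul_I p).mul
    (hf.hasFDerivAt.comp p (hasFDerivAt_circleMap c p))).neg
  rw [h.fderiv]
  simp only [ContinuousLinearMap.comp_add, Function.comp_apply, _root_.neg_apply, _root_.add_apply,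
    _root_.smul_apply, ContinuousLinearMap.comp_apply, ContinuousLinearMap.coe_fst',
    ContinuousLinearMap.coe_snd', ofRealCLM_apply, Complex.ofReal_one, smul_eq_mul, mul_zero,
    mul_one, map_zero, add_zero]
  ring

theorem divergence_polarFlux (hf : DifferentiableAt ℝ f (circleMap c p.1 p.2)) :
    fderiv ℝ (radialFlux f c) p (1, 0) + fderiv ℝ (angularFlux f c) p (0, 1) =
      2 * I * (p.1 • wDbar f (circleMap c p.1 p.2)) := by
  have hunit : cexp (p.2 * I) * conj (cexp (p.2 * I)) = 1 := by
    rw [mul_conj', norm_exp_ofReal_mul_I, Complex.ofReal_one, one_pow]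
  rw [fderiv_radialFlux_one_zero hf, fderiv_angularFlux_zero_one hf]
  simp only [fderiv_eq_wD_mul_add_wDbar_mul_conj, circleMap_zero, map_mul, conj_ofReal, conj_I,
    real_smul]
  linear_combination (2 * I * p.1 * wDbar f (circleMap c p.1 p.2)) * hunit

theorem continuousOn_comp_circleMap (hf : ContinuousOn f (closedBall c R)) :
    ContinuousOn (fun p : ℝ × ℝ => f (circleMap c p.1 p.2)) (Set.Icc (0, -π) (R, π)) := by
  refine hf.comp (by unfold circleMap; fun_prop) fun p hp => ?_
  exact closedBall_subset_closedBall hp.2.1 (circleMap_mem_closedBall c hp.1.1 p.2)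

theorem continuousOn_radialFlux (hf : ContinuousOn f (closedBall c R)) :
    ContinuousOn (radialFlux f c) (Set.Icc (0, -π) (R, π)) :=
  ContinuousOn.mul (by unfold circleMap; fun_prop) (continuousOn_comp_circleMap hf)

theorem continuousOn_angularFlux (hf : ContinuousOn f (closedBall c R)) :
    ContinuousOn (angularFlux f c) (Set.Icc (0, -π) (R, π)) :=
  (ContinuousOn.mul (by fun_prop) (continuousOn_comp_circleMap hf)).neg

theorem angularFlux_neg_pi (f : ℂ → ℂ) (c : ℂ) (r : ℝ) :
    angularFlux f c (r, -π) = angularFlux f c (r, π) := by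
  have h : cexp ((-π : ℝ) * I) = cexp (π * I) := by
    rw [ofReal_neg, neg_mul, exp_neg, exp_pi_mul_I, inv_neg_one]
  simp only [angularFlux, circleMap, h]

theorem countable_setOf_circleMap_mem {s : Set ℂ} (hs : s.Countable) (c : ℂ) :
    {p ∈ Set.Ioi (0 : ℝ) ×ˢ Set.Ioo (-π) π | circleMap c p.1 p.2 ∈ s}.Countable := by
  refine Set.Countable.mono ?_ (hs.image fun ζ => Complex.polarCoord (ζ - c))
  rintro p ⟨hp, hps⟩
  refine ⟨circleMap c p.1 p.2, hps, ?_⟩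
  simp only [← add_polarCoord_symm_eq_circleMap, add_sub_cancel_left]
  exact Complex.polarCoord.right_inv hp

end PolarFlux

theorem circleIntegral_eq_setIntegral_wDbar_off_countable {f : ℂ → ℂ} {c : ℂ} {R : ℝ}
    (hR : 0 ≤ R) {s : Set ℂ} (hs : s.Countable) (hfc : ContinuousOn f (closedBall c R))
    (hfd : ∀ z ∈ ball c R \ s, DifferentiableAt ℝ f z)
    (hfi : IntegrableOn (wDbar f) (closedBall c R)) :
    ∮ ζ in C(c, R), f ζ = 2 * I * ∫ ζ in closedBall c R, wDbar f ζ := by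
  set t : Set (ℝ × ℝ) := {p ∈ Set.Ioi (0 : ℝ) ×ˢ Set.Ioo (-π) π | circleMap c p.1 p.2 ∈ s}
  have ht : t.Countable := countable_setOf_circleMap_mem hs c
  have hdiff : ∀ p ∈ Set.Ioo 0 R ×ˢ Set.Ioo (-π) π \ t,
      DifferentiableAt ℝ f (circleMap c p.1 p.2) := fun p hp => by
    refine hfd _ ⟨?_, fun hps => hp.2 ⟨⟨hp.1.1.1, hp.1.2⟩, hps⟩⟩
    rw [mem_ball, Complex.dist_eq, circleMap_sub_center, norm_circleMap_zero, abs_of_pos hp.1.1.1]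
    exact hp.1.1.2
  have hdiv : ∀ᵐ p ∂volume.restrict (Set.Icc ((0 : ℝ), -π) (R, π)),
      fderiv ℝ (radialFlux f c) p (1, 0) + fderiv ℝ (angularFlux f c) p (0, 1) =
        2 * I * (p.1 • wDbar f (circleMap c p.1 p.2)) := by
    rw [← Set.Icc_prod_Icc, Measure.volume_eq_prod, ← Measure.restrict_congr_set
      (Measure.set_prod_ae_eq Ioo_ae_eq_Icc Ioo_ae_eq_Icc)]
    filter_upwards [ae_restrict_mem (measurableSet_Ioo.prod measurableSet_Ioo),
      ae_restrict_of_ae (ht.ae_notMem _)] with p hp hpt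
    exact divergence_polarFlux (hdiff p ⟨hp, hpt⟩)
  have hint := (integrableOn_closedBall_iff_integrableOn_circleMap.1 hfi).const_mul (2 * I)
  have hstokes := integral_divergence_prod_Icc_of_hasFDerivAt_off_countable_of_le
    (radialFlux f c) (angularFlux f c) _ _ (0, -π) (R, π)
    ⟨hR, by linarith [Real.pi_pos]⟩ t ht
    (continuousOn_radialFlux hfc) (continuousOn_angularFlux hfc)
    (fun p hp => (differentiableAt_radialFlux (hdiff p hp)).hasFDerivAt)
    (fun p hp => (differentiableAt_angularFlux (hdiff p hp)).hasFDerivAt)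
    (hint.congr (hdiv.mono fun _ h => h.symm))
  rw [integral_congr_ae hdiv, integral_const_mul,
    ← setIntegral_closedBall_eq_setIntegral_circleMap] at hstokes
  rw [hstokes, circleIntegral_eq_integral_neg_pi_pi]
  simp [angularFlux_neg_pi, radialFlux]

theorem integrable_indicator_unitBall_norm_inv :
    Integrable ((ball (0 : ℂ) 1).indicator fun w => ‖w‖⁻¹) := by
  rw [integrable_indicator_iff measurableSet_ball]
  refine integrableOn_ball_of_norm_le_rpow (C := 1) (α := 1) (by simp) (by simp) ?_ (by fun_prop)
  exact .of_forall fun w => by simp [Real.rpow_neg_one]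

theorem norm_inv_le_indicator_unitBall_add_one (w : ℂ) :
    ‖w‖⁻¹ ≤ (ball (0 : ℂ) 1).indicator (fun w => ‖w‖⁻¹) w + 1 := by
  by_cases h : w ∈ ball (0 : ℂ) 1
  · simp [h]
  · rw [Set.indicator_of_notMem h, zero_add]
    exact inv_le_one_of_one_le₀ (by simpa using h)

section CauchyKernel

variable {s : Set ℂ}

theorem integrableOn_norm_sub_inv (hs : volume s ≠ ∞) (z : ℂ) :
    IntegrableOn (fun ζ => ‖ζ - z‖⁻¹) s := by
  refine ((integrable_indicator_unitBall_norm_inv.comp_sub_right z).integrableOn.add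
    (integrableOn_const hs (C := (1 : ℝ)))).mono' (by fun_prop) (.of_forall fun ζ => ?_)
  simpa using norm_inv_le_indicator_unitBall_add_one (ζ - z)

theorem exists_forall_setIntegral_norm_sub_inv_le (hs : volume s ≠ ∞) :
    ∃ C : ℝ, ∀ z : ℂ, ∫ ζ in s, ‖ζ - z‖⁻¹ ≤ C := by
  have hunit := integrable_indicator_unitBall_norm_inv.comp_sub_right
  have hone : IntegrableOn (fun _ => (1 : ℝ)) s := integrableOn_const hs
  refine ⟨(∫ w, (ball (0 : ℂ) 1).indicator (fun w => ‖w‖⁻¹) w) + ∫ _ in s, (1 : ℝ), fun z => ?_⟩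
  calc ∫ ζ in s, ‖ζ - z‖⁻¹
      ≤ ∫ ζ in s, ((ball (0 : ℂ) 1).indicator (fun w => ‖w‖⁻¹) (ζ - z) + 1) :=
        integral_mono (integrableOn_norm_sub_inv hs z) ((hunit z).integrableOn.add hone)
          fun ζ => norm_inv_le_indicator_unitBall_add_one (ζ - z)
    _ = (∫ ζ in s, (ball (0 : ℂ) 1).indicator (fun w => ‖w‖⁻¹) (ζ - z)) + ∫ _ in s, (1 : ℝ) :=
        integral_add (hunit z).integrableOn hone
    _ ≤ (∫ ζ, (ball (0 : ℂ) 1).indicator (fun w => ‖w‖⁻¹) (ζ - z)) + ∫ _ in s, (1 : ℝ) := by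
        gcongr ?_ + _
        exact setIntegral_le_integral (hunit z)
          (.of_forall fun ζ => Set.indicator_nonneg (fun _ _ => by positivity) _)
    _ = _ := by
        rw [integral_sub_right_eq_self fun w => (ball (0 : ℂ) 1).indicator (fun w => ‖w‖⁻¹) w]

theorem integrableOn_div_sub_of_memLp_top (hs : volume s ≠ ∞) {g : ℂ → ℂ}
    (hg : MemLp g ∞ (volume.restrict s)) (z : ℂ) : IntegrableOn (fun ζ => g ζ / (ζ - z)) s := by
  have hkernel : IntegrableOn (fun ζ => (ζ - z)⁻¹) s := by
    rw [IntegrableOn, ← integrable_norm_iff (by fun_prop)]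
    simp only [norm_inv]
    exact integrableOn_norm_sub_inv hs z
  exact hkernel.mul_of_top_right hg

end CauchyKernel

/-- Lebesgue measure on the closed disk of radius `R` about the origin, the domain of integration
of the Cauchy–Green operator. -/
noncomputable abbrev diskMeasure (R : ℝ) : Measure ℂ := volume.restrict (closedBall 0 R)

section CauchyGreenOperator

variable {R : ℝ} {g h : ℂ → ℂ}

theorem ae_eq_diskMeasure_of_eqOn_ball (hgh : Set.EqOn g h (ball 0 R)) :
    g =ᵐ[diskMeasure R] h := by
  have hsphere : closedBall (0 : ℂ) R =ᵐ[volume] ball 0 R := by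
    rw [← ball_union_sphere]
    exact union_ae_eq_left_of_ae_eq_empty (ae_eq_empty.2 (Measure.addHaar_sphere volume 0 R))
  rw [diskMeasure, Measure.restrict_congr_set hsphere]
  exact ae_restrict_of_forall_mem measurableSet_ball hgh

theorem memLp_top_diskMeasure_of_continuousOn (hg : ContinuousOn g (closedBall 0 R)) :
    MemLp g ∞ (diskMeasure R) := by
  obtain ⟨C, hC⟩ := (isCompact_closedBall (0 : ℂ) R).exists_bound_of_continuousOn hg
  exact memLp_top_of_bound (hg.aestronglyMeasurable measurableSet_closedBall) C
    (ae_restrict_of_forall_mem measurableSet_closedBall hC)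

theorem integrable_div_sub_diskMeasure (hg : MemLp g ∞ (diskMeasure R)) (z : ℂ) :
    Integrable (fun ζ => g ζ / (ζ - z)) (diskMeasure R) :=
  integrableOn_div_sub_of_memLp_top measure_closedBall_lt_top.ne hg z

theorem Tcg_congr_ae (hgh : g =ᵐ[diskMeasure R] h) : Tcg R g = Tcg R h := by
  funext z
  have hquot : (fun ζ => g ζ / (ζ - z)) =ᵐ[diskMeasure R] fun ζ => h ζ / (ζ - z) :=
    hgh.mono fun ζ hζ => congrArg (· / (ζ - z)) hζ
  simp only [Tcg, integral_congr_ae hquot]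

theorem Tcg_add (hg : MemLp g ∞ (diskMeasure R)) (hh : MemLp h ∞ (diskMeasure R)) :
    Tcg R (g + h) = Tcg R g + Tcg R h := by
  funext z
  simp only [Tcg, Pi.add_apply, add_div]
  rw [integral_add (integrable_div_sub_diskMeasure hg z) (integrable_div_sub_diskMeasure hh z),
    mul_add]

theorem Tcg_const_smul (c : ℂ) (g : ℂ → ℂ) : Tcg R (c • g) = c • Tcg R g := by
  funext z
  simp only [Tcg, Pi.smul_apply, smul_eq_mul, mul_div_assoc, integral_const_mul]
  ring

theorem Tcg_zero : Tcg R 0 = 0 := by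
  simpa using Tcg_const_smul (R := R) 0 0

theorem aestronglyMeasurable_Tcg (hg : AEStronglyMeasurable g (diskMeasure R)) :
    AEStronglyMeasurable (Tcg R g) (diskMeasure R) := by
  have hkernel : AEStronglyMeasurable (fun p : ℂ × ℂ => g p.2 / (p.2 - p.1))
      ((diskMeasure R).prod (diskMeasure R)) :=
    (hg.comp_snd).div₀ (by fun_prop)
  exact hkernel.integral_prod_right'.const_mul _

theorem memLp_top_Tcg (hg : MemLp g ∞ (diskMeasure R)) : MemLp (Tcg R g) ∞ (diskMeasure R) := by
  have hfinite : volume (closedBall (0 : ℂ) R) ≠ ∞ := measure_closedBall_lt_top.ne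
  obtain ⟨C, hC⟩ := exists_forall_setIntegral_norm_sub_inv_le hfinite
  set M := lpNorm g ∞ (diskMeasure R)
  have hM : 0 ≤ M := lpNorm_nonneg
  refine memLp_top_of_bound (aestronglyMeasurable_Tcg hg.1) (π⁻¹ * (M * C)) (.of_forall fun z => ?_)
  calc ‖Tcg R g z‖ = π⁻¹ * ‖∫ ζ in closedBall (0 : ℂ) R, g ζ / (ζ - z)‖ := by
        rw [Tcg, norm_mul, norm_neg, norm_inv, norm_real, Real.norm_of_nonneg Real.pi_pos.le]
    _ ≤ π⁻¹ * ∫ ζ in closedBall (0 : ℂ) R, M * ‖ζ - z‖⁻¹ := by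
        gcongr
        refine norm_integral_le_of_norm_le ((integrableOn_norm_sub_inv hfinite z).const_mul M) ?_
        filter_upwards [ae_le_lpNorm_exponent_top hg] with ζ hζ
        rw [norm_div, div_eq_mul_inv]
        gcongr
    _ ≤ π⁻¹ * (M * C) := by
        rw [integral_const_mul]
        gcongr
        exact hC z

theorem memLp_top_iterate_Tcg (hg : MemLp g ∞ (diskMeasure R)) (n : ℕ) :
    MemLp ((Tcg R)^[n] g) ∞ (diskMeasure R) := by
  induction n with
  | zero => exact hg
  | succ n ih => exact Function.iterate_succ_apply' _ n g ▸ memLp_top_Tcg ih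

theorem eqOn_ball_iterate_Tcg (hgh : Set.EqOn g h (ball 0 R)) (n : ℕ) :
    Set.EqOn ((Tcg R)^[n] g) ((Tcg R)^[n] h) (ball 0 R) := by
  cases n with
  | zero => exact hgh
  | succ n =>
    rw [Function.iterate_succ_apply, Function.iterate_succ_apply,
      Tcg_congr_ae (ae_eq_diskMeasure_of_eqOn_ball hgh)]
    exact Set.eqOn_refl _ _

theorem iterate_Tcg_add (hg : MemLp g ∞ (diskMeasure R)) (hh : MemLp h ∞ (diskMeasure R)) (n : ℕ) :
    (Tcg R)^[n] (g + h) = (Tcg R)^[n] g + (Tcg R)^[n] h := by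
  induction n with
  | zero => rfl
  | succ n ih =>
    simp only [Function.iterate_succ_apply', ih]
    exact Tcg_add (memLp_top_iterate_Tcg hg n) (memLp_top_iterate_Tcg hh n)

theorem iterate_Tcg_sum {ι : Type*} {s : Finset ι} {F : ι → ℂ → ℂ}
    (hF : ∀ i ∈ s, MemLp (F i) ∞ (diskMeasure R)) (n : ℕ) :
    (Tcg R)^[n] (∑ i ∈ s, F i) = ∑ i ∈ s, (Tcg R)^[n] (F i) := by
  classical
  induction s using Finset.induction_on with
  | empty => exact Function.iterate_fixed Tcg_zero n
  | insert i s hi ih =>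
    rw [Finset.forall_mem_insert] at hF
    rw [Finset.sum_insert hi, Finset.sum_insert hi,
      iterate_Tcg_add hF.1 (memLp_finsetSum' s hF.2), ih hF.2]

theorem semiconj_star_Tcgbar_Tcg : Function.Semiconj star (Tcgbar R) (Tcg R) := fun g =>
  star_star (Tcg R (star g))

theorem semiconj_star_Scaubar_Scau : Function.Semiconj star (Scaubar R) (Scau R) := fun g =>
  star_star (Scau R (star g))

theorem memLp_top_iterate_Tcgbar (hg : MemLp g ∞ (diskMeasure R)) (n : ℕ) :
    MemLp ((Tcgbar R)^[n] g) ∞ (diskMeasure R) := by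
  rw [← star_star ((Tcgbar R)^[n] g), semiconj_star_Tcgbar_Tcg.iterate_right n g]
  exact (memLp_top_iterate_Tcg hg.star n).star

end CauchyGreenOperator

section CauchyGreenFormula

variable {R : ℝ} {f u : ℂ → ℂ} {z ζ : ℂ}

theorem wDbar_const_sub_of_odd (hodd : ∀ w, u (2 * z - w) = -u w)
    (hu : Differentiable ℝ u) (w : ℂ) : wDbar u (2 * z - w) = wDbar u w := by
  have hcomp : HasFDerivAt (fun w => u (2 * z - w)) (-fderiv ℝ u (2 * z - w)) w := by
    have h := (hu (2 * z - w)).hasFDerivAt.comp w ((hasFDerivAt_id w).const_sub (2 * z))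
    rwa [ContinuousLinearMap.comp_neg, ContinuousLinearMap.comp_id] at h
  have hneg : HasFDerivAt (fun w => u (2 * z - w)) (-fderiv ℝ u w) w :=
    funext hodd ▸ (hu w).hasFDerivAt.neg
  simp only [wDbar, neg_injective (hcomp.unique hneg)]

theorem Tcg_eq_zero_of_even (heven : ∀ w, f (2 * z - w) = f w)
    (hsupp : Function.support f ⊆ closedBall 0 R) : Tcg R f z = 0 := by
  have hvanish : ∀ w ∉ closedBall (0 : ℂ) R, f w / (w - z) = 0 := fun w hw => by
    rw [Function.notMem_support.1 fun h => hw (hsupp h), zero_div]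
  have hodd : ∀ w, f (2 * z - w) / (2 * z - w - z) = -(f w / (w - z)) := fun w => by
    rw [heven, ← div_neg]
    congr 1
    ring
  have hreflect := integral_sub_left_eq_self (fun w => f w / (w - z)) volume (2 * z)
  simp only [hodd, integral_neg] at hreflect
  rw [Tcg, setIntegral_eq_integral_of_forall_compl_eq_zero hvanish, neg_eq_self.1 hreflect,
    mul_zero]

theorem exists_odd_wDbar_eq_one (z : ℂ) {ε : ℝ} (hε : 0 < ε) :
    ∃ u : ℂ → ℂ, ContDiff ℝ 1 u ∧ tsupport u ⊆ closedBall z ε ∧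
      (∀ w, u (2 * z - w) = -u w) ∧ wDbar u z = 1 := by
  let χ : ContDiffBump z := ⟨ε / 2, ε, half_pos hε, half_lt_self hε⟩
  refine ⟨fun w => χ w • conj (w - z), ?_, ?_, fun w => ?_, ?_⟩
  · exact χ.contDiff.smul (conjCLE.contDiff.comp (contDiff_id.sub contDiff_const))
  · exact (tsupport_smul_subset_left _ _).trans χ.tsupport_eq.subset
  · have hχ : χ (2 * z - w) = χ w := by
      convert χ.sub (w - z) using 2 <;> ring
    have hconj : conj (2 * z - w - z) = -conj (w - z) := by
      rw [← map_neg]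
      congr 1
      ring
    simp only [hχ, hconj, smul_neg]
  · have heq : (fun w => χ w • conj (w - z)) =ᶠ[𝓝 z] fun w => conjCLE (w - z) :=
      χ.eventuallyEq_one.mono fun w hw => by simp [hw]
    have hderiv : HasFDerivAt (fun w => conjCLE (w - z)) (conjCLE : ℂ →L[ℝ] ℂ) z :=
      conjCLE.hasFDerivAt.comp z ((hasFDerivAt_id z).sub_const z)
    rw [wDbar_eq_of_eventuallyEq heq, wDbar, hderiv.fderiv]
    simp

theorem dslope_eventuallyEq_sub_inv_mul (hζ : ζ ≠ z) :
    dslope f z =ᶠ[𝓝 ζ] (fun w => (w - z)⁻¹) * (f - fun _ => f z) :=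
  dslope_eventuallyEq_slope_of_ne f hζ

theorem differentiableAt_real_dslope_of_ne (hζ : ζ ≠ z) (hf : DifferentiableAt ℝ f ζ) :
    DifferentiableAt ℝ (dslope f z) ζ :=
  (((differentiableAt_id.sub_const z).inv (sub_ne_zero.2 hζ)).mul
    (hf.sub_const (f z))).congr_of_eventuallyEq (dslope_eventuallyEq_sub_inv_mul hζ)

theorem wDbar_dslope_of_ne (hζ : ζ ≠ z) (hf : DifferentiableAt ℝ f ζ) :
    wDbar (dslope f z) ζ = wDbar f ζ / (ζ - z) := by
  have hinv : DifferentiableAt ℂ (fun w => (w - z)⁻¹) ζ :=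
    (differentiableAt_id.sub_const z).inv (sub_ne_zero.2 hζ)
  have hconst : DifferentiableAt ℂ (fun _ => f z) ζ := differentiableAt_const _
  rw [differentiableAt_complex_iff_wDbar_eq_zero] at hinv hconst
  rw [wDbar_eq_of_eventuallyEq (dslope_eventuallyEq_sub_inv_mul hζ),
    wDbar_mul hinv.1 (hf.sub hconst.1), wDbar_sub hf hconst.1, hinv.2, hconst.2]
  ring

theorem circleIntegral_dslope {c : ℂ} (hf : ContinuousOn f (sphere c R)) (hz : z ∈ ball c R) :
    ∮ ζ in C(c, R), dslope f z ζ = (∮ ζ in C(c, R), f ζ / (ζ - z)) - 2 * π * I * f z := by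
  have hR : 0 ≤ R := (pos_of_mem_ball hz).le
  have hne : ∀ ζ ∈ sphere c R, ζ ≠ z := fun ζ hζ hζz =>
    (mem_ball.1 hz).ne (hζz ▸ mem_sphere.1 hζ)
  have hinv : ContinuousOn (fun ζ => (ζ - z)⁻¹) (sphere c R) :=
    (continuousOn_id.sub continuousOn_const).inv₀ fun ζ hζ => sub_ne_zero.2 (hne ζ hζ)
  calc ∮ ζ in C(c, R), dslope f z ζ
      = ∮ ζ in C(c, R), (f ζ * (ζ - z)⁻¹ - f z * (ζ - z)⁻¹) := by
        refine circleIntegral.integral_congr hR fun ζ hζ => ?_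
        simp only [dslope_of_ne f (hne ζ hζ), slope_def_field, div_eq_mul_inv, sub_mul]
    _ = (∮ ζ in C(c, R), f ζ * (ζ - z)⁻¹) - ∮ ζ in C(c, R), f z * (ζ - z)⁻¹ :=
        circleIntegral.integral_sub ((hf.mul hinv).circleIntegrable hR)
          ((continuousOn_const.mul hinv).circleIntegrable hR)
    _ = (∮ ζ in C(c, R), f ζ / (ζ - z)) - 2 * π * I * f z := by
        rw [circleIntegral.integral_const_mul, circleIntegral.integral_sub_inv_of_mem_ball hz,
          mul_comm (f z)]
        simp only [div_eq_mul_inv]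

variable {U : Set ℂ}

theorem memLp_top_wDbar (hU : IsOpen U) (hDU : closedBall 0 R ⊆ U) (hf : ContDiffOn ℝ 1 f U) :
    MemLp (wDbar f) ∞ (diskMeasure R) :=
  memLp_top_diskMeasure_of_continuousOn
    ((contDiffOn_wDbar (n := 0) hU hf).continuousOn.mono hDU)

theorem Tcg_wDbar_of_wDbar_eq_zero (hU : IsOpen U) (hDU : closedBall 0 R ⊆ U)
    (hf : ContDiffOn ℝ 1 f U) (hz : z ∈ ball 0 R) (hfz : wDbar f z = 0) :
    Tcg R (wDbar f) z = f z - Scau R f z := by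
  have hdiff : ∀ ζ ∈ closedBall (0 : ℂ) R, DifferentiableAt ℝ f ζ := fun ζ hζ =>
    (hf.differentiableOn one_ne_zero).differentiableAt (hU.mem_nhds (hDU hζ))
  have hcont : ContinuousOn f (closedBall 0 R) := hf.continuousOn.mono hDU
  have hslope : ∀ᵐ ζ ∂diskMeasure R, wDbar f ζ / (ζ - z) = wDbar (dslope f z) ζ := by
    filter_upwards [ae_restrict_mem measurableSet_closedBall,
      ae_restrict_of_ae (Measure.ae_ne volume z)] with ζ hζ hne
    exact (wDbar_dslope_of_ne hne (hdiff ζ hζ)).symm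
  have hholo : DifferentiableAt ℂ f z :=
    differentiableAt_complex_iff_wDbar_eq_zero.2 ⟨hdiff z (ball_subset_closedBall hz), hfz⟩
  have hstokes := circleIntegral_eq_setIntegral_wDbar_off_countable (pos_of_mem_ball hz).le
    (Set.countable_singleton z)
    ((continuousOn_dslope (closedBall_mem_nhds_of_mem hz)).2 ⟨hcont, hholo⟩)
    (fun ζ hζ => differentiableAt_real_dslope_of_ne hζ.2 (hdiff ζ (ball_subset_closedBall hζ.1)))
    ((integrable_div_sub_diskMeasure (memLp_top_wDbar hU hDU hf) z).congr hslope)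
  rw [circleIntegral_dslope (hcont.mono sphere_subset_closedBall) hz, ← integral_congr_ae hslope]
    at hstokes
  rw [Tcg, Scau, sub_eq_iff_eq_add.1 hstokes]
  have hπ : (π : ℂ) ≠ 0 := ofReal_ne_zero.2 Real.pi_ne_zero
  field_simp
  ring

theorem Scau_congr (hR : 0 ≤ R) (hfu : Set.EqOn f u (sphere 0 R)) : Scau R f = Scau R u := by
  funext z
  exact congrArg _ (circleIntegral.integral_congr hR fun ζ hζ => congrArg (· / (ζ - z)) (hfu hζ))

theorem exists_wDbar_eq_one_Tcg_wDbar_eq_zero (hz : z ∈ ball 0 R) :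
    ∃ u : ℂ → ℂ, ContDiff ℝ 1 u ∧ u z = 0 ∧ wDbar u z = 1 ∧ Set.EqOn u 0 (sphere 0 R) ∧
      Tcg R (wDbar u) z = 0 := by
  have hnorm : ‖z‖ < R := by simpa using hz
  obtain ⟨u, hu, husupp, hodd, huz⟩ :=
    exists_odd_wDbar_eq_one z (ε := (R - ‖z‖) / 2) (by linarith)
  have hsub : tsupport u ⊆ ball 0 R :=
    husupp.trans (closedBall_subset_ball' (by rw [dist_zero_right]; linarith))
  refine ⟨u, hu, self_eq_neg.1 (by simpa [two_mul] using hodd z), huz, fun w hw => ?_, ?_⟩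
  · exact image_eq_zero_of_notMem_tsupport fun hmem => sphere_disjoint_ball.le_bot ⟨hw, hsub hmem⟩
  · exact Tcg_eq_zero_of_even (wDbar_const_sub_of_odd hodd (hu.differentiable one_ne_zero))
      ((support_wDbar_subset_tsupport u).trans (hsub.trans ball_subset_closedBall))

theorem Tcg_wDbar (hU : IsOpen U) (hDU : closedBall 0 R ⊆ U) (hf : ContDiffOn ℝ 1 f U)
    (hz : z ∈ ball 0 R) : Tcg R (wDbar f) z = f z - Scau R f z := by
  obtain ⟨u, hu, hu0, huz, husphere, hTu⟩ := exists_wDbar_eq_one_Tcg_wDbar_eq_zero hz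
  set v := wDbar f z • u
  have hv : ContDiffOn ℝ 1 v U := (hu.const_smul (wDbar f z)).contDiffOn
  have hfv : ContDiffOn ℝ 1 (f - v) U := hf.sub hv
  have hsub : ∀ w ∈ closedBall (0 : ℂ) R, wDbar (f - v) w = wDbar f w - wDbar v w := fun w hw =>
    have hwU : U ∈ 𝓝 w := hU.mem_nhds (hDU hw)
    wDbar_sub ((hf.differentiableOn one_ne_zero).differentiableAt hwU)
      ((hv.differentiableOn one_ne_zero).differentiableAt hwU)
  have hwDbar_v : wDbar v = wDbar f z • wDbar u := wDbar_const_smul _ u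
  have hTv : Tcg R (wDbar v) z = 0 := by
    simp [hwDbar_v, Tcg_const_smul, hTu]
  have hdecomp : wDbar f =ᵐ[diskMeasure R] wDbar (f - v) + wDbar v :=
    ae_eq_diskMeasure_of_eqOn_ball fun w hw => by simp [hsub w (ball_subset_closedBall hw)]
  have hboundary : Scau R (f - v) = Scau R f :=
    Scau_congr (pos_of_mem_ball hz).le fun w hw => by simp [v, husphere hw]
  calc Tcg R (wDbar f) z = Tcg R (wDbar (f - v)) z + Tcg R (wDbar v) z := by
        rw [Tcg_congr_ae hdecomp,
          Tcg_add (memLp_top_wDbar hU hDU hfv) (memLp_top_wDbar hU hDU hv), Pi.add_apply]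
    _ = (f - v) z - Scau R (f - v) z := by
        rw [hTv, add_zero]
        refine Tcg_wDbar_of_wDbar_eq_zero hU hDU hfv hz ?_
        simp [hsub z (ball_subset_closedBall hz), hwDbar_v, huz]
    _ = f z - Scau R f z := by
        simp [hboundary, v, hu0]

end CauchyGreenFormula

section Iteration

variable {R : ℝ} {U : Set ℂ} {g : ℂ → ℂ} {n : ℕ}

theorem memLp_top_Scau (hU : IsOpen U) (hDU : closedBall 0 R ⊆ U) (hg : ContDiffOn ℝ 1 g U) :
    MemLp (Scau R g) ∞ (diskMeasure R) := by
  have hrep : Set.EqOn (g - Tcg R (wDbar g)) (Scau R g) (ball 0 R) := fun z hz => by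
    simp [Tcg_wDbar hU hDU hg hz]
  exact ((memLp_top_diskMeasure_of_continuousOn (hg.continuousOn.mono hDU)).sub
    (memLp_top_Tcg (memLp_top_wDbar hU hDU hg))).ae_eq (ae_eq_diskMeasure_of_eqOn_ball hrep)

theorem memLp_top_Scaubar (hU : IsOpen U) (hDU : closedBall 0 R ⊆ U) (hg : ContDiffOn ℝ 1 g U) :
    MemLp (Scaubar R g) ∞ (diskMeasure R) :=
  (memLp_top_Scau hU hDU (contDiffOn_star hg)).star

theorem eqOn_sum_iterate_Tcg_Scau_add (hU : IsOpen U) (hDU : closedBall 0 R ⊆ U)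
    (hg : ContDiffOn ℝ n g U) :
    Set.EqOn g (∑ j ∈ Finset.range n, (Tcg R)^[j] (Scau R (wDbar^[j] g)) +
      (Tcg R)^[n] (wDbar^[n] g)) (ball 0 R) := by
  induction n with
  | zero => simp [Set.eqOn_refl]
  | succ n ih =>
    have hgn : ContDiffOn ℝ 1 (wDbar^[n] g) U :=
      contDiffOn_iterate_wDbar (n := 1) hU (by rwa [add_comm])
    have hformula : Set.EqOn (wDbar^[n] g) (Scau R (wDbar^[n] g) + Tcg R (wDbar^[n + 1] g))
        (ball 0 R) := fun z hz => by
      simp [Function.iterate_succ_apply', Tcg_wDbar hU hDU hgn hz]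
    have hlast : MemLp (wDbar^[n + 1] g) ∞ (diskMeasure R) := by
      rw [Function.iterate_succ_apply']
      exact memLp_top_wDbar hU hDU hgn
    intro z hz
    have hstep := eqOn_ball_iterate_Tcg hformula n hz
    rw [iterate_Tcg_add (memLp_top_Scau hU hDU hgn) (memLp_top_Tcg hlast)] at hstep
    rw [ih (hg.of_le (by norm_cast; lia)) hz, Pi.add_apply, hstep, Finset.sum_range_succ,
      Function.iterate_succ_apply (Tcg R)]
    simp only [Pi.add_apply, add_assoc]

theorem star_iterate_Tcgbar_Scaubar (g : ℂ → ℂ) (j : ℕ) :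
    star ((Tcgbar R)^[j] (Scaubar R (wD^[j] g))) =
      (Tcg R)^[j] (Scau R (wDbar^[j] (star g))) := by
  rw [semiconj_star_Tcgbar_Tcg.iterate_right j, semiconj_star_Scaubar_Scau,
    semiconj_star_wD_wDbar.iterate_right j]

theorem star_iterate_Tcgbar_wD (g : ℂ → ℂ) (n : ℕ) :
    star ((Tcgbar R)^[n] (wD^[n] g)) = (Tcg R)^[n] (wDbar^[n] (star g)) := by
  rw [semiconj_star_Tcgbar_Tcg.iterate_right n, semiconj_star_wD_wDbar.iterate_right n]

theorem eqOn_sum_iterate_Tcgbar_Scaubar_add (hU : IsOpen U) (hDU : closedBall 0 R ⊆ U)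
    (hg : ContDiffOn ℝ n g U) :
    Set.EqOn g (∑ j ∈ Finset.range n, (Tcgbar R)^[j] (Scaubar R (wD^[j] g)) +
      (Tcgbar R)^[n] (wD^[n] g)) (ball 0 R) := by
  refine fun z hz => star_injective ?_
  have h := eqOn_sum_iterate_Tcg_Scau_add hU hDU (contDiffOn_star hg) hz
  simp only [← star_iterate_Tcgbar_Scaubar, ← star_iterate_Tcgbar_wD, ← star_sum, ← star_add] at h
  exact h

end Iteration

theorem iterated_cauchy_green_formula_general {R : ℝ} {μ ν : ℕ} {U : Set ℂ} {f : ℂ → ℂ}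
    (hU : IsOpen U) (hDU : closedBall 0 R ⊆ U) (hf : ContDiffOn ℝ (μ + ν : ℕ) f U) {z : ℂ}
    (hz : z ∈ ball 0 R) :
    (Tcg R)^[ν] ((Tcgbar R)^[μ] (wDij μ ν f)) z
      = f z - (∑ j ∈ Finset.range ν, (Tcg R)^[j] (Scau R (wDij 0 j f)) z)
          - ∑ j ∈ Finset.range μ, (Tcg R)^[ν] ((Tcgbar R)^[j] (Scaubar R (wDij j ν f))) z := by
  have hfν : ContDiffOn ℝ μ (wDbar^[ν] f) U := contDiffOn_iterate_wDbar hU hf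
  have hboundary : ∀ j ∈ Finset.range μ,
      MemLp ((Tcgbar R)^[j] (Scaubar R (wD^[j] (wDbar^[ν] f)))) ∞ (diskMeasure R) := fun j hj =>
    have hj1 : 1 + j ≤ μ := by have := Finset.mem_range.1 hj; lia
    memLp_top_iterate_Tcgbar (memLp_top_Scaubar hU hDU (contDiffOn_iterate_wD (n := 1) hU
      (hfν.of_le (by exact_mod_cast hj1)))) j
  have hremainder : MemLp ((Tcgbar R)^[μ] (wD^[μ] (wDbar^[ν] f))) ∞ (diskMeasure R) :=
    memLp_top_iterate_Tcgbar (memLp_top_diskMeasure_of_continuousOn ((contDiffOn_iterate_wD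
      (n := 0) hU (by rwa [zero_add])).continuousOn.mono hDU)) μ
  have houter := eqOn_sum_iterate_Tcg_Scau_add hU hDU
    (hf.of_le (by norm_cast; lia) : ContDiffOn ℝ ν f U) hz
  have hinner := eqOn_ball_iterate_Tcg (eqOn_sum_iterate_Tcgbar_Scaubar_add hU hDU hfν) ν hz
  rw [iterate_Tcg_add (memLp_finsetSum' _ hboundary) hremainder, iterate_Tcg_sum hboundary]
    at hinner
  rw [Pi.add_apply, hinner] at houter
  simp only [Pi.add_apply, Finset.sum_apply] at houter
  simp only [wDij, Function.iterate_zero_apply]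
  linear_combination -houter

/-- iterated Cauchy–Green representation formula for `f ∈ C^{m+α}(D)`,
`μ, ν ≥ 1`, `μ + ν = m`. -/
theorem iterated_cauchy_green_formula (α R : ℝ) (hα : α ∈ Set.Ioo (0:ℝ) 1) (hR : 0 < R)
    (m μ ν : ℕ) (hμ : 1 ≤ μ) (hν : 1 ≤ ν) (hμν : μ + ν = m)
    (f : ℂ → ℂ) (hf : CkHolder m α R f) :
    ∀ z ∈ ball (0:ℂ) R,
      (Tcg R)^[ν] ((Tcgbar R)^[μ] (wDij μ ν f)) z
        = f z - (∑ j ∈ Finset.range ν, (Tcg R)^[j] (Scau R (wDij 0 j f)) z)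
            - ∑ j ∈ Finset.range μ, (Tcg R)^[ν] ((Tcgbar R)^[j] (Scaubar R (wDij j ν f))) z := by
  subst hμν
  obtain ⟨⟨U, hU, hDU, hfU⟩, -⟩ := hf
  exact fun z hz => iterated_cauchy_green_formula_general hU hDU hfU hz
end

section
/- Let D' ⊆ ℂ and δ ⊆ ℂ be closed disks with δ ⊆ D', let m ≥ 2 and n ≥ 0 be integers, and let s be an interior point of δ. Then ∫_{D' \ δ} (conj(ζ) − conj(s))^n / (ζ − s)^m dA(ζ) = 0. -/
open Complex MeasureTheory Metric

/-!
Let `g = f'` be holomorphic on a disk `B` with centre `c`, and let `a ∈ B`. On the circle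
`|z - c| = r` one has `conj (z - a) * (z - c) = r² - conj (a - c) * (z - c)`, so there
`conj (g z) / (z - a)` is the conjugate of a meromorphic function of `z`, whose only possible pole
is `w(r) = c + r² / conj (a - c)`, the inversion of `a` in the circle. Its circle average is
therefore `0` if `a` lies inside, and `-conj (g (w(r))) / (a - c)` if `a` lies outside. In the
second case, `2πr` times this average is `-π` times the `r`-derivative of `conj (f (w(r)))`. As
`w(0) = c` and `w(|a - c|) = a`, integrating in polar coordinates gives
`∫_B conj (g z) / (z - a) dA(z) = π (conj (f c) - conj (f a))`.

Subtracting this formula for two nested disks cancels the term `conj (f a)`: on the region between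
them the integral of `conj (g z) / (z - a)` does not depend on the point `a` of the inner disk.
Differentiating in `a` under the integral sign raises the exponent of `z - a`, so all exponents
`m ≥ 2` give `0`. The theorem is the case `g z = (z - s) ^ n`.
-/

open EuclideanGeometry Set Filter Topology
open scoped ComplexConjugate

section PolarCoordinates

variable {E : Type*} [NormedAddCommGroup E] [NormedSpace ℝ E] {f : ℂ → E}

theorem integrableOn_comp_polarCoord_symm (hf : Integrable f) :
    IntegrableOn (fun p : ℝ × ℝ ↦ p.1 • f (Complex.polarCoord.symm p)) polarCoord.target := by
  have hf' : Integrable (f ∘ measurableEquivRealProd.symm) :=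
    volume_preserving_equiv_real_prod.symm.integrable_comp_of_integrable hf
  have himage : IntegrableOn (f ∘ measurableEquivRealProd.symm)
      (polarCoord.symm '' polarCoord.target) := hf'.integrableOn
  rw [integrableOn_image_iff_integrableOn_abs_det_fderiv_smul volume
    polarCoord.open_target.measurableSet
    (fun p _ ↦ (hasFDerivAt_polarCoord_symm p).hasFDerivWithinAt) polarCoord.symm.injOn] at himage
  refine himage.congr_fun (fun p hp ↦ ?_) polarCoord.open_target.measurableSet
  simp only [det_fderivPolarCoordSymm, abs_of_pos (mem_Ioi.1 hp.1), Function.comp_apply,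
    measurableEquivRealProd_symm_polarCoord_symm_apply]

theorem setIntegral_Ioo_comp_polarCoord_symm (f : ℂ → E) (r : ℝ) :
    ∫ θ in Ioo (-Real.pi) Real.pi, f (Complex.polarCoord.symm (r, θ)) =
      (2 * Real.pi) • Real.circleAverage f 0 r := by
  have hcircle (θ : ℝ) : Complex.polarCoord.symm (r, θ) = circleMap 0 r θ := by
    simp [circleMap, exp_mul_I]
  rw [Real.circleAverage_eq_integral_add (-Real.pi), smul_inv_smul₀ Real.two_pi_pos.ne',
    intervalIntegral.integral_comp_add_right (fun θ ↦ f (circleMap 0 r θ)),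
    intervalIntegral.integral_of_le (by linarith [Real.pi_pos]), integral_Ioc_eq_integral_Ioo]
  simp only [hcircle]
  ring_nf

theorem integral_eq_integral_Ioi_circleAverage (hf : Integrable f) (c : ℂ) :
    ∫ z, f z = ∫ r in Ioi (0 : ℝ), (2 * Real.pi * r) • Real.circleAverage f c r := by
  have hint := integrableOn_comp_polarCoord_symm (hf.comp_add_right c)
  simp_rw [← integral_add_right_eq_self f c, ← Complex.integral_comp_polarCoord_symm,
    ← Real.circleAverage_map_add_const (c := c)]
  rw [polarCoord_target, Measure.volume_eq_prod] at hint ⊢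
  rw [setIntegral_prod _ hint]
  refine setIntegral_congr_fun measurableSet_Ioi fun r _ ↦ ?_
  simp only [integral_smul]
  rw [setIntegral_Ioo_comp_polarCoord_symm (fun z ↦ f (z + c)), smul_smul, mul_comm]

theorem setIntegral_ball_eq_integral_circleAverage {c : ℂ} {R : ℝ} (hR : 0 ≤ R)
    (hf : IntegrableOn f (ball c R)) :
    ∫ z in ball c R, f z = ∫ r in 0..R, (2 * Real.pi * r) • Real.circleAverage f c r := by
  have hsphere {r : ℝ} (hr : 0 < r) :
      Real.circleAverage ((ball c R).indicator f) c r =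
        (Iio R).indicator (Real.circleAverage f c) r := by
    by_cases hrR : r < R
    · rw [indicator_of_mem (mem_Iio.2 hrR)]
      refine Real.circleAverage_congr_sphere fun z hz ↦ indicator_of_mem ?_ f
      rwa [mem_ball, mem_sphere.1 hz, abs_of_pos hr]
    · rw [indicator_of_notMem (mt mem_Iio.1 hrR),
        Real.circleAverage_congr_sphere (f₂ := fun _ ↦ 0) fun z hz ↦ indicator_of_notMem ?_ f]
      · simp [Real.circleAverage]
      rwa [mem_ball, mem_sphere.1 hz, abs_of_pos hr]
  rw [← integral_indicator measurableSet_ball,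
    integral_eq_integral_Ioi_circleAverage (hf.integrable_indicator measurableSet_ball) c,
    intervalIntegral.integral_of_le hR, integral_Ioc_eq_integral_Ioo, ← Ioi_inter_Iio,
    ← setIntegral_indicator measurableSet_Iio]
  refine setIntegral_congr_fun measurableSet_Ioi fun r hr ↦ ?_
  simp only [hsphere hr, indicator_smul_apply]

end PolarCoordinates

section CauchyKernel

theorem integrableOn_inv_sub_ball (a : ℂ) (r : ℝ) :
    IntegrableOn (fun z ↦ (z - a)⁻¹) (ball a r) := by
  have hzero : IntegrableOn (fun z : ℂ ↦ z⁻¹) (ball 0 r) :=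
    integrableOn_ball_of_norm_le_rpow (C := 1) (α := 1) (by simp) (by simp)
      (by simp [Real.rpow_neg_one]) (by fun_prop)
  have h := ((measurePreserving_sub_right volume a).integrableOn_comp_preimage
    (measurableEmbedding_subRight a)).2 hzero
  have hball : (fun z ↦ z - a) ⁻¹' ball 0 r = ball a r := by
    ext z
    rw [mem_preimage, mem_ball_zero_iff, mem_ball, dist_eq_norm]
  rwa [hball] at h

theorem integrableOn_div_sub {g : ℂ → ℂ} {S : Set ℂ} {a : ℂ} (hg : IntegrableOn g S)
    (hga : ContinuousAt g a) : IntegrableOn (fun z ↦ g z / (z - a)) S := by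
  obtain ⟨ε, hε, hbound⟩ := Metric.eventually_nhds_iff_ball.1
    (hga.norm.eventually_le_const (lt_add_one ‖g a‖))
  have hkernel : Integrable ((ball a ε).indicator fun z ↦ (z - a)⁻¹) :=
    (integrableOn_inv_sub_ball a ε).integrable_indicator measurableSet_ball
  have hmajorant : IntegrableOn (fun z ↦ ε⁻¹ * ‖g z‖ +
      (‖g a‖ + 1) * ‖(ball a ε).indicator (fun z ↦ (z - a)⁻¹) z‖) S :=
    (hg.norm.const_mul _).add (hkernel.integrableOn.norm.const_mul _)
  have hmeas : AEStronglyMeasurable (fun z ↦ (z - a)⁻¹) (volume.restrict S) := by fun_prop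
  simp only [div_eq_mul_inv]
  refine hmajorant.mono' (hg.aestronglyMeasurable.mul hmeas) (.of_forall fun z ↦ ?_)
  rw [norm_mul]
  by_cases hz : z ∈ ball a ε
  · rw [indicator_of_mem hz]
    exact (mul_le_mul_of_nonneg_right (hbound z hz) (norm_nonneg _)).trans
      (le_add_of_nonneg_left (by positivity))
  · have hinv : ‖(z - a)⁻¹‖ ≤ ε⁻¹ := by
      rw [norm_inv]
      rw [mem_ball, dist_eq_norm, not_lt] at hz
      exact inv_anti₀ hε hz
    rw [indicator_of_notMem hz, norm_zero, mul_zero, add_zero, mul_comm]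
    exact mul_le_mul_of_nonneg_right hinv (norm_nonneg _)

theorem integrableOn_conj_div_sub {g : ℂ → ℂ} {S : Set ℂ} {a : ℂ} (hg : IntegrableOn g S)
    (hga : ContinuousAt g a) : IntegrableOn (fun z ↦ conj (g z) / (z - a)) S :=
  integrableOn_div_sub ((conjCLE : ℂ →L[ℝ] ℂ).integrable_comp hg)
    (continuous_conj.continuousAt.comp hga)

end CauchyKernel

section CircleAverages

theorem circleAverage_conj_comp {g : ℂ → ℂ} (c : ℂ) (r : ℝ) :
    Real.circleAverage (fun z ↦ conj (g z)) c r = conj (Real.circleAverage g c r) := by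
  simp only [Real.circleAverage, intervalIntegral, Complex.real_smul, map_mul, map_sub, conj_ofReal,
    integral_conj]

theorem conj_sub_mul_sub_of_mem_sphere {c z : ℂ} {r : ℝ} (hz : z ∈ sphere c r) (a : ℂ) :
    conj (z - a) * (z - c) = r ^ 2 - conj (a - c) * (z - c) := by
  have hzc : conj (z - c) * (z - c) = r ^ 2 := by rw [conj_mul', mem_sphere_iff_norm.1 hz]
  rw [← hzc, ← sub_mul, ← map_sub, sub_sub_sub_cancel_right]

theorem circleAverage_conj_div_sub_of_dist_lt {g : ℂ → ℂ} {c a : ℂ} {r : ℝ}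
    (hg : DiffContOnCl ℂ g (ball c r)) (ha : dist a c < r) :
    Real.circleAverage (fun z ↦ conj (g z) / (z - a)) c r = 0 := by
  have hr : 0 < r := dist_nonneg.trans_lt ha
  have hne : ∀ z ∈ closedBall c r, (r : ℂ) ^ 2 - conj (a - c) * (z - c) ≠ 0 := by
    intro z hz h
    rw [mem_closedBall, dist_eq_norm] at hz
    rw [dist_eq_norm] at ha
    have hnorm : r ^ 2 = ‖a - c‖ * ‖z - c‖ := by
      simpa [abs_of_pos hr, -map_sub] using congrArg norm (sub_eq_zero.1 h)
    nlinarith [norm_nonneg (a - c), norm_nonneg (z - c)]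
  have hdiff : DiffContOnCl ℂ
      (fun z ↦ ((r : ℂ) ^ 2 - conj (a - c) * (z - c))⁻¹ • ((z - c) • g z)) (ball c |r|) := by
    rw [abs_of_pos hr]
    refine DiffContOnCl.smul (DiffContOnCl.inv ?_ ?_) (DiffContOnCl.smul ?_ hg)
    · exact Differentiable.diffContOnCl (by fun_prop)
    · rwa [closure_ball c hr.ne']
    · exact Differentiable.diffContOnCl (by fun_prop)
  calc Real.circleAverage (fun z ↦ conj (g z) / (z - a)) c r
    _ = Real.circleAverage (fun z ↦ conj
          (((r : ℂ) ^ 2 - conj (a - c) * (z - c))⁻¹ • ((z - c) • g z))) c r := by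
      refine Real.circleAverage_congr_sphere fun z hz ↦ ?_
      rw [abs_of_pos hr] at hz
      have hzc : z - c ≠ 0 := sub_ne_zero.2 (ne_of_mem_sphere hz hr.ne')
      have h : (r : ℂ) ^ 2 - conj (a - c) * (z - c) ≠ 0 := hne z (sphere_subset_closedBall hz)
      rw [← conj_sub_mul_sub_of_mem_sphere hz a] at h ⊢
      rw [smul_eq_mul, smul_eq_mul, mul_inv, mul_assoc, inv_mul_cancel_left₀ hzc, map_mul,
        map_inv₀, conj_conj, div_eq_inv_mul]
    _ = 0 := by rw [circleAverage_conj_comp, hdiff.circleAverage]; simp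

theorem inversion_eq_add_sq_div_conj_sub (c a : ℂ) (r : ℝ) :
    inversion c r a = c + r ^ 2 / conj (a - c) := by
  rcases eq_or_ne a c with rfl | hac
  · simp
  rw [inversion, vsub_eq_sub, vadd_eq_add, real_smul, ofReal_pow, ofReal_div, div_pow,
    dist_eq_norm, ← conj_mul', div_mul_eq_mul_div, mul_div_mul_right _ _ (sub_ne_zero.2 hac),
    add_comm]

theorem inv_conj_sub_of_mem_sphere {c z a : ℂ} {r : ℝ} (hz : z ∈ sphere c r) (hr : r ≠ 0)
    (hac : a ≠ c) :
    (conj (z - a))⁻¹ = -(conj (a - c))⁻¹ * ((z - c) / (z - inversion c r a)) := by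
  have hzc : z - c ≠ 0 := sub_ne_zero.2 (ne_of_mem_sphere hz hr)
  have hac' : conj (a - c) ≠ 0 := (map_ne_zero _).2 (sub_ne_zero.2 hac)
  have hza : conj (z - a) * (z - c) = -conj (a - c) * (z - inversion c r a) := by
    rw [conj_sub_mul_sub_of_mem_sphere hz, inversion_eq_add_sq_div_conj_sub]
    field_simp
    ring
  calc (conj (z - a))⁻¹
    _ = (conj (z - a) * (z - c))⁻¹ * (z - c) := by rw [mul_inv, inv_mul_cancel_right₀ hzc]
    _ = -(conj (a - c))⁻¹ * ((z - c) / (z - inversion c r a)) := by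
      rw [hza, mul_inv, inv_neg]
      ring

theorem circleAverage_conj_div_sub_of_lt_dist {g : ℂ → ℂ} {c a : ℂ} {r : ℝ}
    (hg : DiffContOnCl ℂ g (ball c r)) (hr : 0 < r) (ha : r < dist a c) :
    Real.circleAverage (fun z ↦ conj (g z) / (z - a)) c r =
      -(conj (g (inversion c r a)) / (a - c)) := by
  set w := inversion c r a with hw_def
  have hac : a ≠ c := dist_pos.1 (hr.trans ha)
  have hw : w ∈ ball c |r| := by
    rw [abs_of_pos hr, mem_ball, hw_def, dist_inversion_center, div_lt_iff₀ (hr.trans ha), sq]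
    exact mul_lt_mul_of_pos_left ha hr
  calc Real.circleAverage (fun z ↦ conj (g z) / (z - a)) c r
    _ = Real.circleAverage (fun z ↦ conj
          (-(conj (a - c))⁻¹ • (((z - c) / (z - w)) • g z))) c r := by
      refine Real.circleAverage_congr_sphere fun z hz ↦ ?_
      rw [abs_of_pos hr] at hz
      rw [smul_eq_mul, smul_eq_mul, ← mul_assoc, ← inv_conj_sub_of_mem_sphere hz hr.ne' hac,
        map_mul, map_inv₀, conj_conj, div_eq_inv_mul]
    _ = -(conj (g w) / (a - c)) := by
      rw [← abs_of_pos hr] at hg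
      rw [circleAverage_conj_comp, Real.circleAverage_fun_smul, hg.circleAverage_smul_div hw]
      simp only [smul_eq_mul, map_mul, map_neg, map_inv₀, conj_conj]
      ring

theorem two_pi_mul_smul_circleAverage_conj_div_sub {g : ℂ → ℂ} {c a : ℂ} {r : ℝ}
    (hg : DiffContOnCl ℂ g (ball c r)) (hr : 0 < r) (ha : r < dist a c) :
    (2 * Real.pi * r) • Real.circleAverage (fun z ↦ conj (g z) / (z - a)) c r =
      -Real.pi * conj (g (inversion c r a) * (2 * r / conj (a - c))) := by
  simp only [circleAverage_conj_div_sub_of_lt_dist hg hr ha, real_smul, ofReal_mul, ofReal_ofNat,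
    map_mul, map_div₀, conj_conj, conj_ofReal, map_ofNat]
  ring

end CircleAverages

section DiskFormula

theorem inversion_mem_closedBall {V P : Type*} [NormedAddCommGroup V] [InnerProductSpace ℝ V]
    [MetricSpace P] [NormedAddTorsor V P] {c a : P} {r : ℝ} (hr : r ∈ Icc 0 (dist a c)) :
    inversion c r a ∈ closedBall c (dist a c) := by
  rw [mem_closedBall, dist_inversion_center]
  exact div_le_of_le_mul₀ dist_nonneg dist_nonneg
    ((sq _).le.trans (mul_self_le_mul_self hr.1 hr.2))

variable {f g : ℂ → ℂ} {c a : ℂ} {R : ℝ}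

theorem hasDerivAt_conj_comp_inversion {f' : ℂ} {r : ℝ}
    (hf : HasDerivAt f f' (inversion c r a)) :
    HasDerivAt (fun t : ℝ ↦ conj (f (inversion c t a)))
      (conj (f' * (2 * r / conj (a - c)))) r := by
  simp only [inversion_eq_add_sq_div_conj_sub] at hf ⊢
  have hinner :
      HasDerivAt (fun t : ℝ ↦ c + (t : ℂ) ^ 2 / conj (a - c)) (2 * r / conj (a - c)) r := by
    simpa using (((hasDerivAt_id (r : ℂ)).comp_ofReal.pow 2).div_const (conj (a - c))).const_add c
  have h := (hf.scomp r hinner).star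
  rwa [smul_eq_mul, mul_comm] at h

theorem continuousOn_conj_comp_inversion_mul (hg : ContinuousOn g (ball c R))
    (ha : a ∈ ball c R) :
    ContinuousOn (fun r : ℝ ↦ conj (g (inversion c r a) * (2 * r / conj (a - c))))
      (Icc 0 (dist a c)) := by
  refine continuous_conj.comp_continuousOn (.mul (hg.comp ?_ fun r hr ↦ ?_) (by fun_prop))
  · simp only [inversion_eq_add_sq_div_conj_sub]
    fun_prop
  · exact closedBall_subset_ball ha (inversion_mem_closedBall hr)

theorem integral_conj_comp_inversion_mul (hfg : ∀ z ∈ ball c R, HasDerivAt f (g z) z)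
    (hg : ContinuousOn g (ball c R)) (ha : a ∈ ball c R) :
    ∫ r in 0..dist a c, conj (g (inversion c r a) * (2 * r / conj (a - c))) =
      conj (f a) - conj (f c) := by
  rw [intervalIntegral.integral_eq_sub_of_hasDerivAt (fun r hr ↦
      hasDerivAt_conj_comp_inversion (hfg _ ?_))
    ((continuousOn_conj_comp_inversion_mul hg ha).intervalIntegrable_of_Icc dist_nonneg),
    inversion_dist_center, inversion_zero_radius]
  rw [uIcc_of_le dist_nonneg] at hr
  exact closedBall_subset_ball ha (inversion_mem_closedBall hr)

theorem setIntegral_ball_conj_div_sub (hfg : ∀ z ∈ ball c R, HasDerivAt f (g z) z)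
    (hgint : IntegrableOn g (ball c R)) (ha : a ∈ ball c R) :
    ∫ z in ball c R, conj (g z) / (z - a) = Real.pi * (conj (f c) - conj (f a)) := by
  have hg : DifferentiableOn ℂ g (ball c R) := IsExactOn.differentiableOn isOpen_ball ⟨f, hfg⟩
  set d := dist a c
  set F : ℝ → ℂ := fun r ↦
    (2 * Real.pi * r) • Real.circleAverage (fun z ↦ conj (g z) / (z - a)) c r with hF
  set G : ℝ → ℂ := fun r ↦ conj (g (inversion c r a) * (2 * r / conj (a - c)))
  have hdiff {r : ℝ} (hr : r < R) : DiffContOnCl ℂ g (ball c r) :=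
    hg.diffContOnCl_ball (closedBall_subset_ball hr)
  have hGint : IntervalIntegrable G volume 0 d :=
    (continuousOn_conj_comp_inversion_mul hg.continuousOn ha).intervalIntegrable_of_Icc
      dist_nonneg
  have hinner : EqOn (fun r ↦ -Real.pi * G r) F (uIoo 0 d) := by
    intro r hr
    rw [uIoo_of_le dist_nonneg] at hr
    exact (two_pi_mul_smul_circleAverage_conj_div_sub (hdiff (hr.2.trans ha)) hr.1 hr.2).symm
  have houter : EqOn (fun _ ↦ 0) F (uIoo d R) := by
    intro r hr
    rw [uIoo_of_le (mem_ball.1 ha).le] at hr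
    simp only [hF, circleAverage_conj_div_sub_of_dist_lt (hdiff hr.2) hr.1, smul_zero]
  calc ∫ z in ball c R, conj (g z) / (z - a)
    _ = ∫ r in 0..R, F r := setIntegral_ball_eq_integral_circleAverage (pos_of_mem_ball ha).le
      (integrableOn_conj_div_sub hgint (hg.continuousOn.continuousAt (isOpen_ball.mem_nhds ha)))
    _ = (∫ r in 0..d, F r) + ∫ r in d..R, F r :=
      (intervalIntegral.integral_add_adjacent_intervals ((hGint.const_mul _).congr_uIoo hinner)
        (intervalIntegrable_const.congr_uIoo houter)).symm
    _ = -Real.pi * ∫ r in 0..d, G r := by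
      rw [← intervalIntegral.integral_congr_uIoo hinner,
        ← intervalIntegral.integral_congr_uIoo houter, intervalIntegral.integral_zero, add_zero,
        intervalIntegral.integral_const_mul]
    _ = Real.pi * (conj (f c) - conj (f a)) := by
      rw [integral_conj_comp_inversion_mul hfg hg.continuousOn ha]
      ring

end DiskFormula

section CauchyPowers

variable {μ : Measure ℂ} {g : ℂ → ℂ}

theorem hasDerivAt_div_sub_pow (w : ℂ) {z x : ℂ} (hzx : z ≠ x) (m : ℕ) :
    HasDerivAt (fun x ↦ w / (z - x) ^ m) (m * (w / (z - x) ^ (m + 1))) x := by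
  have hne : z - x ≠ 0 := sub_ne_zero.2 hzx
  convert! (((hasDerivAt_id x).const_sub z).pow m).inv (pow_ne_zero m hne) |>.const_mul w using 1
  simp only [id, Pi.pow_apply]
  rcases m with _ | m
  · simp
  · simp only [Nat.add_sub_cancel]
    field_simp
    ring

theorem hasDerivAt_integral_div_sub_pow (hg : Integrable g μ) {a : ℂ} (ha : a ∉ μ.support)
    (m : ℕ) :
    HasDerivAt (fun x ↦ ∫ z, g z / (z - x) ^ m ∂μ) (m * ∫ z, g z / (z - a) ^ (m + 1) ∂μ) a := by
  obtain ⟨U, hU, hμU⟩ := Measure.notMem_support_iff_exists.1 ha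
  obtain ⟨ε, hε, hball⟩ := Metric.mem_nhds_iff.1 hU
  have hfar : ∀ᵐ z ∂μ, ∀ x ∈ ball a (ε / 2), ε / 2 ≤ ‖z - x‖ := by
    filter_upwards [measure_eq_zero_iff_ae_notMem.1 hμU] with z hz x hx
    have hza : ε ≤ dist z a := not_lt.1 (mt (@hball z) hz)
    rw [← dist_eq_norm]
    linarith [dist_triangle z x a, mem_ball.1 hx]
  have hmeas (k : ℕ) (x : ℂ) : AEStronglyMeasurable (fun z ↦ g z / (z - x) ^ k) μ := by
    have := hg.aestronglyMeasurable
    simp only [div_eq_mul_inv]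
    fun_prop
  have hbound (k : ℕ) : ∀ᵐ z ∂μ, ∀ x ∈ ball a (ε / 2),
      ‖g z / (z - x) ^ k‖ ≤ ‖g z‖ / (ε / 2) ^ k := by
    filter_upwards [hfar] with z hz x hx
    rw [norm_div, norm_pow]
    gcongr
    exact hz x hx
  rw [← integral_const_mul]
  refine (hasDerivAt_integral_of_dominated_loc_of_deriv_le
    (F := fun x z ↦ g z / (z - x) ^ m) (F' := fun x z ↦ m * (g z / (z - x) ^ (m + 1)))
    (bound := fun z ↦ m * (‖g z‖ / (ε / 2) ^ (m + 1))) (ball_mem_nhds a (half_pos hε))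
    (.of_forall (hmeas m)) ?_ ((hmeas (m + 1) a).const_mul _) ?_
    ((hg.norm.div_const _).const_mul _) ?_).2
  · refine (hg.norm.div_const ((ε / 2) ^ m)).mono' (hmeas m a) ?_
    filter_upwards [hbound m] with z hz using hz a (mem_ball_self (half_pos hε))
  · filter_upwards [hbound (m + 1)] with z hz x hx
    rw [norm_mul, norm_natCast]
    gcongr
    exact hz x hx
  · filter_upwards [hfar] with z hz x hx
    have hzx : z ≠ x := sub_ne_zero.1 (norm_pos_iff.1 ((half_pos hε).trans_le (hz x hx)))
    exact hasDerivAt_div_sub_pow (g z) hzx m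

theorem integral_div_sub_pow_eq_zero_of_forall_eq (hg : Integrable g μ) {U : Set ℂ}
    (hU : IsOpen U) (hμU : μ U = 0) {K : ℂ} (hK : ∀ x ∈ U, ∫ z, g z / (z - x) ∂μ = K) {m : ℕ}
    (hm : 2 ≤ m) : ∀ a ∈ U, ∫ z, g z / (z - a) ^ m ∂μ = 0 := by
  have hnext {k : ℕ} (hk : k ≠ 0) {L : ℂ} (hL : ∀ x ∈ U, ∫ z, g z / (z - x) ^ k ∂μ = L) :
      ∀ a ∈ U, ∫ z, g z / (z - a) ^ (k + 1) ∂μ = 0 := by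
    intro a ha
    have hUa : U ∈ 𝓝 a := hU.mem_nhds ha
    have hconst : HasDerivAt (fun x ↦ ∫ z, g z / (z - x) ^ k ∂μ) 0 a :=
      (hasDerivAt_const a L).congr_of_eventuallyEq (eventually_of_mem hUa hL)
    have hsupp : a ∉ μ.support := Measure.notMem_support_iff_exists.2 ⟨U, hUa, hμU⟩
    exact (mul_eq_zero.1 ((hasDerivAt_integral_div_sub_pow hg hsupp k).unique hconst)).resolve_left
      (Nat.cast_ne_zero.2 hk)
  induction m, hm using Nat.le_induction with
  | base => exact hnext one_ne_zero (by simpa only [pow_one] using hK)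
  | succ k hk ih => exact hnext (by lia) ih

end CauchyPowers

theorem closedBall_ae_eq_ball {E : Type*} [NormedAddCommGroup E] [NormedSpace ℝ E]
    [FiniteDimensional ℝ E] [Nontrivial E] [MeasurableSpace E] [BorelSpace E] (μ : Measure E)
    [μ.IsAddHaarMeasure] (c : E) (r : ℝ) : closedBall c r =ᵐ[μ] ball c r := by
  rw [← interior_closedBall']
  exact (interior_ae_eq_of_null_frontier ((convex_closedBall c r).addHaar_frontier μ)).symm

theorem setIntegral_ball_sdiff_ball_conj_div_sub {f g : ℂ → ℂ} {c₁ c₂ a : ℂ} {R₁ r₂ : ℝ}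
    (hfg : ∀ z ∈ ball c₁ R₁, HasDerivAt f (g z) z) (hgint : IntegrableOn g (ball c₁ R₁))
    (hsub : ball c₂ r₂ ⊆ ball c₁ R₁) (ha : a ∈ ball c₂ r₂) :
    ∫ z in ball c₁ R₁ \ ball c₂ r₂, conj (g z) / (z - a) =
      Real.pi * (conj (f c₁) - conj (f c₂)) := by
  have hcont : ContinuousAt g a :=
    (IsExactOn.differentiableOn isOpen_ball ⟨f, hfg⟩).continuousOn.continuousAt
      (isOpen_ball.mem_nhds (hsub ha))
  rw [setIntegral_sdiff measurableSet_ball (integrableOn_conj_div_sub hgint hcont) hsub,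
    setIntegral_ball_conj_div_sub hfg hgint (hsub ha),
    setIntegral_ball_conj_div_sub (fun z hz ↦ hfg z (hsub hz)) (hgint.mono_set hsub) ha]
  ring

theorem integral_annulus_zero_general {g : ℂ → ℂ} {c₁ c₂ s : ℂ} {R₁ r₂ : ℝ}
    (hg : DifferentiableOn ℂ g (ball c₁ R₁)) (hgint : IntegrableOn g (ball c₁ R₁))
    (hsub : closedBall c₂ r₂ ⊆ closedBall c₁ R₁) {m : ℕ} (hm : 2 ≤ m) (hs : s ∈ ball c₂ r₂) :
    ∫ ζ in closedBall c₁ R₁ \ closedBall c₂ r₂, conj (g ζ) / (ζ - s) ^ m = 0 := by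
  have hballs : ball c₂ r₂ ⊆ ball c₁ R₁ := by
    simpa only [interior_closedBall'] using interior_mono hsub
  obtain ⟨f, hfg⟩ := hg.isExactOn_ball
  have hae : (closedBall c₁ R₁ \ closedBall c₂ r₂ : Set ℂ) =ᵐ[volume] ball c₁ R₁ \ ball c₂ r₂ :=
    (closedBall_ae_eq_ball volume c₁ R₁).diff (closedBall_ae_eq_ball volume c₂ r₂)
  have hnull : volume.restrict (ball c₁ R₁ \ ball c₂ r₂) (ball c₂ r₂) = 0 := by
    rw [Measure.restrict_apply measurableSet_ball, inter_sdiff_self, measure_empty]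
  have hconj : IntegrableOn (fun ζ ↦ conj (g ζ)) (ball c₁ R₁ \ ball c₂ r₂) :=
    (conjCLE : ℂ →L[ℝ] ℂ).integrable_comp (hgint.mono_set sdiff_subset)
  rw [setIntegral_congr_set hae]
  exact integral_div_sub_pow_eq_zero_of_forall_eq hconj isOpen_ball hnull
    (fun a ha ↦ setIntegral_ball_sdiff_ball_conj_div_sub hfg hgint hballs ha) hm s hs

/-- `∫_{D' \ δ} (conj ζ − conj s)^n/(ζ − s)^m dA(ζ) = 0` for closed
disks `δ ⊆ D'`, `m ≥ 2`, `n ≥ 0`, and `s` an interior point of `δ`. -/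
theorem integral_annulus_zero (c₁ c₂ : ℂ) (R₁ r₂ : ℝ) (hr₂ : 0 < r₂)
    (hsub : closedBall c₂ r₂ ⊆ closedBall c₁ R₁) (m n : ℕ) (hm : 2 ≤ m)
    (s : ℂ) (hs : s ∈ ball c₂ r₂) :
    ∫ ζ in closedBall c₁ R₁ \ closedBall c₂ r₂,
      ((starRingEnd ℂ) ζ - (starRingEnd ℂ) s) ^ n / (ζ - s) ^ m = 0 := by
  have hcont : Continuous fun ζ : ℂ ↦ (ζ - s) ^ n := by fun_prop
  simpa only [map_pow, map_sub] using integral_annulus_zero_general (g := fun ζ ↦ (ζ - s) ^ n)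
    (by fun_prop) ((hcont.continuousOn.integrableOn_compact (isCompact_closedBall c₁ R₁)).mono_set
      ball_subset_closedBall) hsub hm hs
end

section
/- Let k ≥ 0 be an integer and α ∈ (0,1). There is a constant C, depending only on k and α, such that for every R > 0 and every f of class C^{k+α}(D), the α-Hölder constant on the open disk {|z| < R} of the k-th complex derivative of S_b f satisfies H_α[∂^k S_b f] ≤ C Σ_{i+j=k} H_α[∂^i∂̄^j f]. -/
open Complex MeasureTheory Metric ENNReal NNReal

/-! `∂^{k+1} S_b f(z)` is, up to a constant factor, the Cauchy-type integral of
`f(ζ) (ζ - z)^{-k-2} dζ̄` over the circle. Since `ζ̄ = R² / ζ` there, this integral vanishes when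
`f` is a polynomial of degree at most `k` in `ζ - z` and its conjugate, so `f` may be replaced by
the remainder of its Taylor expansion at `z`. The integrand is then `O(|ζ - z|^{α-2})`, which
integrates to `|∂^{k+1} S_b f(z)| = O((R - |z|)^{α-1})`, and by the Hardy–Littlewood lemma a
function with this gradient growth is `α`-Hölder on the disk. -/

open scoped Nat ComplexConjugate
open Finset.HasAntidiagonal (antidiagonal)

section Wirtinger

/-- The first-order operator `(∂/∂x + c ∂/∂y) / 2`, which is `∂` for `c = -i` and `∂̄` for
`c = i`; the parameter lets the two Wirtinger derivatives share their lemmas. -/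
noncomputable def wirtinger (c : ℂ) (f : ℂ → ℂ) : ℂ → ℂ := fun z =>
  (fderiv ℝ f z 1 + c * fderiv ℝ f z I) / 2

theorem wD_eq_wirtinger : wD = wirtinger (-I) := by
  funext f z
  rw [wD, wirtinger, neg_mul, sub_eq_add_neg]

theorem wDbar_eq_wirtinger : wDbar = wirtinger I := rfl

variable {U : Set ℂ} {f g : ℂ → ℂ} {n : ℕ} {c c' : ℂ}

theorem wirtinger_congr (hU : IsOpen U) (hfg : Set.EqOn f g U) :
    Set.EqOn (wirtinger c f) (wirtinger c g) U := fun z hz => by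
  simp only [wirtinger, (hfg.eventuallyEq_of_mem (hU.mem_nhds hz)).fderiv_eq]

theorem wirtinger_iterate_congr (hU : IsOpen U) (hfg : Set.EqOn f g U) (n : ℕ) :
    Set.EqOn ((wirtinger c)^[n] f) ((wirtinger c)^[n] g) U := by
  induction n generalizing f g with
  | zero => exact hfg
  | succ _ ih => exact ih (wirtinger_congr hU hfg)

theorem contDiffOn_wirtinger (hU : IsOpen U) (hf : ContDiffOn ℝ (n + 1) f U) :
    ContDiffOn ℝ n (wirtinger c f) U := by
  have hf' : ContDiffOn ℝ n (fderiv ℝ f) U := hf.fderiv_of_isOpen hU le_rfl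
  exact ((hf'.clm_apply contDiffOn_const).add
    (contDiffOn_const.mul (hf'.clm_apply contDiffOn_const))).div_const 2

theorem fderiv_wirtinger_apply {z : ℂ} (hf : DifferentiableAt ℝ (fderiv ℝ f) z) (v : ℂ) :
    fderiv ℝ (wirtinger c f) z v =
      (fderiv ℝ (fderiv ℝ f) z v 1 + c * fderiv ℝ (fderiv ℝ f) z v I) / 2 := by
  have happly (u : ℂ) : HasFDerivAt (fun w => fderiv ℝ f w u)
      ((fderiv ℝ (fderiv ℝ f) z).flip u) z := by
    simpa using hf.hasFDerivAt.clm_apply (hasFDerivAt_const u z)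
  have hwirt : HasFDerivAt (wirtinger c f) ((2 : ℂ)⁻¹ •
      ((fderiv ℝ (fderiv ℝ f) z).flip 1 + c • (fderiv ℝ (fderiv ℝ f) z).flip I)) z := by
    exact (((happly 1).add ((happly I).const_mul c)).mul_const (2 : ℂ)⁻¹).congr_of_eventuallyEq
      (.of_forall fun w => div_eq_mul_inv _ _)
  rw [hwirt.fderiv, div_eq_inv_mul]
  rfl

theorem wirtinger_comm (hU : IsOpen U) (hf : ContDiffOn ℝ 2 f U) :
    Set.EqOn (wirtinger c (wirtinger c' f)) (wirtinger c' (wirtinger c f)) U := by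
  intro z hz
  have hfz : ContDiffAt ℝ 2 f z := hf.contDiffAt (hU.mem_nhds hz)
  have hdiff : DifferentiableAt ℝ (fderiv ℝ f) z :=
    (hfz.fderiv_right (m := 1) (by norm_num)).differentiableAt one_ne_zero
  have hsymm : fderiv ℝ (fderiv ℝ f) z I 1 = fderiv ℝ (fderiv ℝ f) z 1 I :=
    hfz.isSymmSndFDerivAt (by simp) I 1
  rw [wirtinger, wirtinger]
  simp only [fderiv_wirtinger_apply hdiff, hsymm]
  ring

theorem wirtinger_iterate_comm (hU : IsOpen U) (hf : ContDiffOn ℝ (n + 1) f U) :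
    Set.EqOn ((wirtinger c)^[n] (wirtinger c' f)) (wirtinger c' ((wirtinger c)^[n] f)) U := by
  induction n generalizing f with
  | zero => exact fun _ _ => rfl
  | succ n ih =>
    have hcomm := wirtinger_comm (c := c) (c' := c') hU
      (hf.of_le (by norm_cast; omega))
    exact (wirtinger_iterate_congr hU hcomm n).trans (ih (contDiffOn_wirtinger hU hf))

theorem wDij_wD {i j : ℕ} (hU : IsOpen U) (hf : ContDiffOn ℝ (j + 1) f U) :
    Set.EqOn (wDij i j (wD f)) (wDij (i + 1) j f) U := by
  simp only [wDij, wD_eq_wirtinger, wDbar_eq_wirtinger]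
  exact wirtinger_iterate_congr hU (wirtinger_iterate_comm hU hf) i

/-- The real-linear form `a dz + b dz̄`. -/
noncomputable def wirtingerForm (a b : ℂ) : ℂ →L[ℝ] ℂ :=
  a • ContinuousLinearMap.id ℝ ℂ + b • (conjCLE : ℂ →L[ℝ] ℂ)

theorem wirtingerForm_apply (a b h : ℂ) : wirtingerForm a b h = a * h + b * conj h := rfl

theorem wirtingerForm_sub (a b a' b' : ℂ) :
    wirtingerForm a b - wirtingerForm a' b' = wirtingerForm (a - a') (b - b') := by
  ext h
  simp only [sub_apply, wirtingerForm_apply]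
  ring

theorem smul_wirtingerForm (c a b : ℂ) :
    c • wirtingerForm a b = wirtingerForm (c * a) (c * b) := by
  simp only [wirtingerForm, smul_add, smul_smul]

theorem norm_wirtingerForm_le (a b : ℂ) : ‖wirtingerForm a b‖ ≤ ‖a‖ + ‖b‖ :=
  ContinuousLinearMap.opNorm_le_bound _ (by positivity) fun h => by
    rw [wirtingerForm_apply, add_mul]
    exact (norm_add_le _ _).trans_eq (by simp)

theorem hasFDerivAt_wirtingerForm {z : ℂ} (hf : DifferentiableAt ℝ f z) :
    HasFDerivAt f (wirtingerForm (wD f z) (wDbar f z)) z := by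
  have hdecomp (h : ℂ) : fderiv ℝ f z h = h.re * fderiv ℝ f z 1 + h.im * fderiv ℝ f z I := by
    conv_lhs => rw [show h = h.re • (1 : ℂ) + h.im • I by simp [re_add_im]]
    rw [map_add, map_smul, map_smul, real_smul, real_smul]
  convert hf.hasFDerivAt using 1
  ext h
  rw [hdecomp, wirtingerForm_apply, wD, wDbar, re_eq_add_conj, im_eq_sub_conj]
  field_simp
  linear_combination (conj h - h) * fderiv ℝ f z I * I_sq

end Wirtinger

section Taylor

variable {U s : Set ℂ} {f : ℂ → ℂ} {z x : ℂ} {k : ℕ} {c c' : ℕ → ℕ → ℂ}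

/-- The polynomial `∑_{i+j≤k} c i j h^i h̄^j / (i! j!)`; for `c i j = ∂^i∂̄^j f(z)` it is the Taylor
polynomial of `f` at `z`. (`TaylorP` has the weights `1 / (i+j)!` instead.) -/
noncomputable def wirtingerPoly (k : ℕ) (c : ℕ → ℕ → ℂ) (h : ℂ) : ℂ :=
  ∑ l ∈ Finset.range (k + 1), ∑ p ∈ antidiagonal l,
    c p.1 p.2 * (h ^ p.1 / p.1 ! * (conj h ^ p.2 / p.2 !))

theorem wirtingerPoly_zero_right (k : ℕ) (c : ℕ → ℕ → ℂ) : wirtingerPoly k c 0 = c 0 0 := by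
  rw [wirtingerPoly, Finset.sum_range_succ', Finset.sum_eq_zero, zero_add]
  · simp
  · intro l _
    refine Finset.sum_eq_zero fun p hp => ?_
    rw [Finset.HasAntidiagonal.mem_antidiagonal] at hp
    obtain h1 | h2 : p.1 ≠ 0 ∨ p.2 ≠ 0 := by omega
    · simp [h1]
    · simp [h2]

theorem wirtingerPoly_congr (hc : ∀ i j, i + j ≤ k → c i j = c' i j) (w : ℂ) :
    wirtingerPoly k c w = wirtingerPoly k c' w := by
  refine Finset.sum_congr rfl fun l hl => Finset.sum_congr rfl fun p hp => ?_
  rw [Finset.mem_range] at hl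
  rw [Finset.HasAntidiagonal.mem_antidiagonal] at hp
  rw [hc _ _ (by omega)]

theorem wirtingerForm_sum {ι : Type*} (t : Finset ι) (a b : ι → ℂ) :
    ∑ i ∈ t, wirtingerForm (a i) (b i) = wirtingerForm (∑ i ∈ t, a i) (∑ i ∈ t, b i) := by
  ext h
  simp [wirtingerForm_apply, Finset.sum_add_distrib, Finset.sum_mul]

theorem hasFDerivAt_mul_conj {u v : ℂ → ℂ} {u' v' h : ℂ} (hu : HasDerivAt u u' h)
    (hv : HasDerivAt v v' (conj h)) :
    HasFDerivAt (fun h => u h * v (conj h)) (wirtingerForm (u' * v (conj h)) (u h * v')) h := by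
  have hv' := hv.complexToReal_fderiv.comp h conjCLE.hasFDerivAt
  refine (hu.complexToReal_fderiv.mul hv').congr_fderiv ?_
  ext w
  simp [wirtingerForm_apply]
  ring

theorem hasDerivAt_pow_div_factorial (n : ℕ) (h : ℂ) :
    HasDerivAt (fun h : ℂ => h ^ n / n !) (n * h ^ (n - 1) / n !) h :=
  (hasDerivAt_pow n h).div_const _

theorem succ_mul_pow_div_factorial (n : ℕ) (h : ℂ) :
    (n + 1) * h ^ n / (n + 1)! = h ^ n / n ! := by
  rw [Nat.factorial_succ, Nat.cast_mul, Nat.cast_succ,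
    mul_div_mul_left _ _ n.cast_add_one_ne_zero]

theorem hasFDerivAt_wirtingerPoly (k : ℕ) (c : ℕ → ℕ → ℂ) (h : ℂ) :
    HasFDerivAt (wirtingerPoly (k + 1) c)
      (wirtingerForm (wirtingerPoly k (fun i j => c (i + 1) j) h)
        (wirtingerPoly k (fun i j => c i (j + 1)) h)) h := by
  have hterm (p : ℕ × ℕ) := (hasFDerivAt_mul_conj (hasDerivAt_pow_div_factorial p.1 h)
    (hasDerivAt_pow_div_factorial p.2 (conj h))).const_mul (c p.1 p.2)
  have hsum := HasFDerivAt.fun_sum (u := Finset.range (k + 2)) fun l _ =>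
    HasFDerivAt.fun_sum (u := antidiagonal l) fun p _ => hterm p
  refine hsum.congr_fderiv ?_
  simp only [smul_wirtingerForm, wirtingerForm_sum]
  congr 1
  · rw [Finset.sum_range_succ']
    simp [Finset.Nat.sum_antidiagonal_succ, succ_mul_pow_div_factorial, wirtingerPoly]
  · rw [Finset.sum_range_succ']
    simp [Finset.Nat.sum_antidiagonal_succ', succ_mul_pow_div_factorial, wirtingerPoly]

/-- The remainder at `x` of the Taylor expansion of `f` of order `k` around `z`. -/
noncomputable def taylorRemainder (k : ℕ) (f : ℂ → ℂ) (z x : ℂ) : ℂ :=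
  f x - wirtingerPoly k (fun i j => wDij i j f z) (x - z)

theorem taylorRemainder_self (k : ℕ) (f : ℂ → ℂ) (z : ℂ) : taylorRemainder k f z z = 0 := by
  rw [taylorRemainder, sub_self, wirtingerPoly_zero_right]
  exact sub_self (f z)

theorem hasFDerivAt_taylorRemainder (hU : IsOpen U) (hf : ContDiffOn ℝ (k + 1) f U) (hz : z ∈ U)
    (hx : x ∈ U) :
    HasFDerivAt (taylorRemainder (k + 1) f z)
      (wirtingerForm (taylorRemainder k (wD f) z x) (taylorRemainder k (wDbar f) z x)) x := by
  have hfx : DifferentiableAt ℝ f x :=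
    (hf.contDiffAt (hU.mem_nhds hx)).differentiableAt (by simp)
  have hwD (i j : ℕ) (hij : i + j ≤ k) : wDij i j (wD f) z = wDij (i + 1) j f z :=
    wDij_wD hU (hf.of_le (by norm_cast; omega)) hz
  rw [taylorRemainder, taylorRemainder, ← wirtingerForm_sub, wirtingerPoly_congr hwD]
  exact (hasFDerivAt_wirtingerForm hfx).sub
    ((hasFDerivAt_comp_sub z).2 (hasFDerivAt_wirtingerPoly k _ (x - z)))

theorem norm_taylorRemainder_le {α M : ℝ} (hα : 0 ≤ α) (hM : 0 ≤ M) (hU : IsOpen U)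
    (hsU : s ⊆ U) (hs : StarConvex ℝ z s) (hf : ContDiffOn ℝ k f U)
    (hhol : ∀ i j, i + j = k → ∀ x ∈ s, ‖wDij i j f x - wDij i j f z‖ ≤ M * ‖x - z‖ ^ α)
    (hx : x ∈ s) :
    ‖taylorRemainder k f z x‖ ≤ 2 ^ k * M * ‖x - z‖ ^ k * ‖x - z‖ ^ α := by
  induction k generalizing f x with
  | zero => simpa [taylorRemainder, wirtingerPoly, wDij] using hhol 0 0 rfl x hx
  | succ k ih =>
    rw [Nat.cast_succ] at hf
    have hz : z ∈ s := hs.mem ⟨x, hx⟩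
    have hseg {y : ℂ} (hy : y ∈ segment ℝ z x) : y ∈ s := hs.segment_subset hx hy
    have hwD (i j : ℕ) (hij : i + j = k) : Set.EqOn (wDij i j (wD f)) (wDij (i + 1) j f) U :=
      wDij_wD hU (hf.of_le (by norm_cast; omega))
    have hremD {y : ℂ} (hy : y ∈ s) := ih (f := wD f)
      (wD_eq_wirtinger ▸ contDiffOn_wirtinger hU hf)
      (fun i j hij w hw => by
        rw [hwD i j hij (hsU hw), hwD i j hij (hsU hz)]
        exact hhol (i + 1) j (by omega) w hw) hy
    have hremDbar {y : ℂ} (hy : y ∈ s) := ih (f := wDbar f) (contDiffOn_wirtinger hU hf)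
      (fun i j hij => hhol i (j + 1) (by omega)) hy
    have hbound (y : ℂ) (hy : y ∈ segment ℝ z x) :
        ‖wirtingerForm (taylorRemainder k (wD f) z y) (taylorRemainder k (wDbar f) z y)‖ ≤
          2 ^ (k + 1) * M * ‖x - z‖ ^ k * ‖x - z‖ ^ α := by
      have hyx : ‖y - z‖ ≤ ‖x - z‖ := norm_sub_le_of_mem_segment hy
      calc _ ≤ 2 ^ k * M * ‖y - z‖ ^ k * ‖y - z‖ ^ α + 2 ^ k * M * ‖y - z‖ ^ k * ‖y - z‖ ^ α :=
            (norm_wirtingerForm_le _ _).trans (add_le_add (hremD (hseg hy)) (hremDbar (hseg hy)))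
        _ = 2 ^ (k + 1) * M * ‖y - z‖ ^ k * ‖y - z‖ ^ α := by ring
        _ ≤ _ := by gcongr
    have hmean := (convex_segment z x).norm_image_sub_le_of_norm_hasFDerivWithin_le
      (fun y hy => (hasFDerivAt_taylorRemainder hU hf (hsU hz) (hsU (hseg hy))).hasFDerivWithinAt)
      hbound (left_mem_segment ℝ z x) (right_mem_segment ℝ z x)
    rw [taylorRemainder_self, sub_zero] at hmean
    exact hmean.trans_eq (by ring)

end Taylor

theorem Hol_le_ofReal_iff {α K : ℝ} {A : Set ℂ} {f : ℂ → ℂ} (hα : 0 < α) (hK : 0 ≤ K) :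
    Hol α A f ≤ ENNReal.ofReal K ↔ ∀ x ∈ A, ∀ y ∈ A, ‖f x - f y‖ ≤ K * ‖x - y‖ ^ α := by
  simp only [Hol, iSup_le_iff]
  refine forall₂_congr fun x _ => forall₂_congr fun y _ => ?_
  rcases eq_or_ne x y with rfl | hxy
  · simp [Real.zero_rpow hα.ne']
  have hpos : 0 < ‖x - y‖ ^ α := Real.rpow_pos_of_pos (norm_sub_pos_iff.2 hxy) α
  rw [forall_prop_of_true hxy, ← enorm_eq_nnnorm, ← enorm_eq_nnnorm, ← ofReal_norm, ← ofReal_norm,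
    ENNReal.ofReal_rpow_of_nonneg (norm_nonneg _) hα.le, ← ENNReal.ofReal_div_of_pos hpos,
    ENNReal.ofReal_le_ofReal_iff hK, div_le_iff₀ hpos]

section HardyLittlewood

variable {E F : Type*} [NormedAddCommGroup E] [NormedSpace ℝ E] [NormedAddCommGroup F]
  [NormedSpace ℝ F] {G : E → F} {G' : E → E →L[ℝ] F} {α A R : ℝ} {x y : E}

theorem norm_sub_le_of_norm_deriv_le_rpow {f f' : ℝ → F} {c δ s : ℝ} (hα : 0 < α) (hα1 : α ≤ 1)
    (hA : 0 ≤ A) (hc : 0 ≤ c) (hδ : 0 < δ) (hs : 0 ≤ s)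
    (hf : ∀ t ∈ Set.Icc 0 s, HasDerivAt f (f' t) t)
    (hf' : ∀ t ∈ Set.Icc 0 s, ‖f' t‖ ≤ A * (δ + c * t) ^ (α - 1) * c) :
    ‖f s - f 0‖ ≤ A / α * (c * s) ^ α := by
  have hprim (t : ℝ) (ht : t ∈ Set.Icc 0 s) :
      HasDerivAt (fun t => A / α * ((δ + c * t) ^ α - δ ^ α))
        (A * (δ + c * t) ^ (α - 1) * c) t := by
    have hpos : 0 < δ + c * t := add_pos_of_pos_of_nonneg hδ (mul_nonneg hc ht.1)
    have hlin : HasDerivAt (fun t => δ + c * t) c t := by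
      simpa using ((hasDerivAt_id t).const_mul c).const_add δ
    refine (((hlin.rpow_const (.inl hpos.ne')).sub_const (δ ^ α)).const_mul (A / α)).congr_deriv ?_
    field_simp
  have hbound := image_norm_le_of_norm_deriv_right_le_deriv_boundary'
    (f := fun t => f t - f 0) (f' := f')
    (fun t ht => ((hf t ht).continuousAt.sub continuousAt_const).continuousWithinAt)
    (fun t ht => ((hf t (Set.Ico_subset_Icc_self ht)).sub_const (f 0)).hasDerivWithinAt)
    (by simp) (fun t ht => (hprim t ht).continuousAt.continuousWithinAt)
    (fun t ht => (hprim t (Set.Ico_subset_Icc_self ht)).hasDerivWithinAt)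
    (fun t ht => hf' t (Set.Ico_subset_Icc_self ht)) (Set.right_mem_Icc.2 hs)
  have hsub : (δ + c * s) ^ α ≤ δ ^ α + (c * s) ^ α :=
    Real.rpow_add_le_add_rpow hδ.le (mul_nonneg hc hs) hα.le hα1
  exact hbound.trans (by gcongr; linarith)

theorem norm_sub_radial_le (hα : 0 < α) (hα1 : α ≤ 1) (hA : 0 ≤ A)
    (hG : ∀ x ∈ ball (0 : E) R, HasFDerivAt G (G' x) x)
    (hG' : ∀ x ∈ ball (0 : E) R, ‖G' x‖ ≤ A * (R - ‖x‖) ^ (α - 1)) {s : ℝ} (hs : s ∈ Set.Icc 0 1)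
    (hx : x ∈ ball 0 R) :
    ‖G ((1 - s) • x) - G x‖ ≤ A / α * (s * R) ^ α := by
  rw [mem_ball_zero_iff] at hx
  have hnorm {t : ℝ} (ht : t ∈ Set.Icc 0 s) : ‖(1 - t) • x‖ = ‖x‖ - ‖x‖ * t := by
    rw [norm_smul, Real.norm_of_nonneg (by linarith [ht.2, hs.2])]
    ring
  have hmem {t : ℝ} (ht : t ∈ Set.Icc 0 s) : (1 - t) • x ∈ ball 0 R := by
    rw [mem_ball_zero_iff, hnorm ht]
    linarith [mul_nonneg (norm_nonneg x) ht.1]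
  have hray (t : ℝ) : HasDerivAt (fun t : ℝ => (1 - t) • x) (-x) t := by
    simpa using ((hasDerivAt_id t).const_sub 1).smul_const x
  have hmain := norm_sub_le_of_norm_deriv_le_rpow (f := fun t => G ((1 - t) • x)) hα hα1 hA
    (norm_nonneg x) (sub_pos.2 hx) hs.1
    (fun t ht => (hG _ (hmem ht)).comp_hasDerivAt t (hray t)) fun t ht => by
      have hG't := hG' _ (hmem ht)
      rw [hnorm ht, ← sub_add] at hG't
      exact ((G' _).le_opNorm _).trans (by rw [norm_neg]; gcongr)
  rw [sub_zero, one_smul] at hmain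
  refine hmain.trans ?_
  have := hs.1
  rw [mul_comm s]
  gcongr

theorem norm_sub_le_of_mem_closedBall_sub {r : ℝ} (hα1 : α ≤ 1) (hA : 0 ≤ A) (hr : 0 < r)
    (hG : ∀ x ∈ ball (0 : E) R, HasFDerivAt G (G' x) x)
    (hG' : ∀ x ∈ ball (0 : E) R, ‖G' x‖ ≤ A * (R - ‖x‖) ^ (α - 1))
    (hx : x ∈ closedBall 0 (R - r)) (hy : y ∈ closedBall 0 (R - r)) :
    ‖G x - G y‖ ≤ A * r ^ (α - 1) * ‖x - y‖ := by
  have hsub : closedBall (0 : E) (R - r) ⊆ ball 0 R := closedBall_subset_ball (by linarith)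
  refine (convex_closedBall 0 (R - r)).norm_image_sub_le_of_norm_hasFDerivWithin_le
    (fun w hw => (hG w (hsub hw)).hasFDerivWithinAt) (fun w hw => ?_) hy hx
  have hw' : r ≤ R - ‖w‖ := by linarith [mem_closedBall_zero_iff.1 hw]
  exact (hG' w (hsub hw)).trans
    (mul_le_mul_of_nonneg_left (Real.rpow_le_rpow_of_nonpos hr hw' (by linarith)) hA)

theorem norm_sub_le_of_norm_sub_le_two_mul {r : ℝ} (hα : 0 < α) (hα1 : α ≤ 1) (hA : 0 ≤ A)
    (hG : ∀ x ∈ ball (0 : E) R, HasFDerivAt G (G' x) x)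
    (hG' : ∀ x ∈ ball (0 : E) R, ‖G' x‖ ≤ A * (R - ‖x‖) ^ (α - 1))
    (hx : x ∈ ball 0 R) (hy : y ∈ ball 0 R) (hr : 0 < r) (hrR : r ≤ R) (hxy : ‖x - y‖ ≤ 2 * r) :
    ‖G x - G y‖ ≤ A * (2 / α + 2) * r ^ α := by
  have hR : 0 < R := hr.trans_le hrR
  have hs : r / R ∈ Set.Icc 0 1 := ⟨by positivity, (div_le_one hR).2 hrR⟩
  have hshrink {w : E} (hw : w ∈ ball 0 R) : (1 - r / R) • w ∈ closedBall 0 (R - r) := by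
    rw [mem_closedBall_zero_iff, norm_smul, Real.norm_of_nonneg (sub_nonneg.2 hs.2)]
    calc (1 - r / R) * ‖w‖ ≤ (1 - r / R) * R :=
          mul_le_mul_of_nonneg_left (mem_ball_zero_iff.1 hw).le (sub_nonneg.2 hs.2)
      _ = R - r := by field_simp
  have hcontract : ‖(1 - r / R) • x - (1 - r / R) • y‖ ≤ 2 * r := by
    rw [← smul_sub, norm_smul, Real.norm_of_nonneg (sub_nonneg.2 hs.2)]
    exact (mul_le_of_le_one_left (norm_nonneg _) (by linarith [hs.1])).trans hxy
  have hradx := norm_sub_radial_le hα hα1 hA hG hG' hs hx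
  have hrady := norm_sub_radial_le hα hα1 hA hG hG' hs hy
  have hinner := norm_sub_le_of_mem_closedBall_sub hα1 hA hr hG hG' (hshrink hx) (hshrink hy)
  rw [div_mul_cancel₀ _ hR.ne'] at hradx hrady
  rw [norm_sub_rev] at hradx
  calc ‖G x - G y‖
      ≤ ‖G x - G ((1 - r / R) • x)‖ + ‖G ((1 - r / R) • x) - G ((1 - r / R) • y)‖ +
          ‖G ((1 - r / R) • y) - G y‖ := by
        simpa only [dist_eq_norm] using dist_triangle4 (G x) _ _ (G y)
    _ ≤ A / α * r ^ α + A * r ^ (α - 1) * (2 * r) + A / α * r ^ α := by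
        gcongr
        exact hinner.trans (by gcongr)
    _ = A * (2 / α + 2) * r ^ α := by
        rw [Real.rpow_sub_one hr.ne']
        field_simp
        ring

theorem norm_sub_le_of_norm_fderiv_le_rpow (hα : 0 < α) (hα1 : α ≤ 1) (hA : 0 ≤ A)
    (hG : ∀ x ∈ ball (0 : E) R, HasFDerivAt G (G' x) x)
    (hG' : ∀ x ∈ ball (0 : E) R, ‖G' x‖ ≤ A * (R - ‖x‖) ^ (α - 1))
    (hx : x ∈ ball 0 R) (hy : y ∈ ball 0 R) :
    ‖G x - G y‖ ≤ A * (2 / α + 2) * ‖x - y‖ ^ α := by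
  rcases eq_or_ne x y with rfl | hxy
  · rw [sub_self, norm_zero]
    positivity
  have hr : 0 < ‖x - y‖ / 2 := half_pos (norm_sub_pos_iff.2 hxy)
  have hrR : ‖x - y‖ / 2 ≤ R := by
    linarith [norm_sub_le x y, mem_ball_zero_iff.1 hx, mem_ball_zero_iff.1 hy]
  calc ‖G x - G y‖ ≤ A * (2 / α + 2) * (‖x - y‖ / 2) ^ α :=
        norm_sub_le_of_norm_sub_le_two_mul hα hα1 hA hG hG' hx hy hr hrR (by linarith)
    _ ≤ A * (2 / α + 2) * ‖x - y‖ ^ α := by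
        gcongr
        exact half_le_self (norm_nonneg _)

end HardyLittlewood

section CauchyTypeIntegral

variable {E : Type*} [NormedAddCommGroup E] [NormedSpace ℂ E] {f : ℂ → E} {c z : ℂ} {R : ℝ}

theorem hasDerivAt_inv_sub_pow {ζ w : ℂ} (h : ζ ≠ w) (n : ℕ) :
    HasDerivAt (fun w => ((ζ - w) ^ (n + 1))⁻¹) ((n + 1) * ((ζ - w) ^ (n + 2))⁻¹) w := by
  have hne : ζ - w ≠ 0 := sub_ne_zero.2 h
  have hpow := ((hasDerivAt_id w).const_sub ζ).fun_pow (n + 1)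
  refine (hpow.fun_inv (pow_ne_zero _ hne)).congr_deriv ?_
  simp only [id, Nat.cast_succ, Nat.add_sub_cancel]
  field_simp
  ring

theorem exists_forall_ball_le_norm_sub_of_notMem {X : Type*} [SeminormedAddCommGroup X] {s : Set X}
    {x : X} (hs : IsClosed s) (hx : x ∉ s) :
    ∃ ε > 0, ∀ w ∈ ball x ε, ∀ y ∈ s, ε ≤ ‖y - w‖ := by
  obtain ⟨ε, hε, hball⟩ := Metric.isOpen_iff.1 hs.isOpen_compl x hx
  refine ⟨ε / 2, half_pos hε, fun w hw y hy => ?_⟩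
  by_contra! hlt
  rw [← dist_eq_norm] at hlt
  exact hball ((dist_triangle y w x).trans_lt (by linarith [mem_ball.1 hw])) hy

theorem hasDerivAt_cauchyTypeIntegral (hf : CircleIntegrable f c R) (hz : z ∉ sphere c |R|)
    (n : ℕ) :
    HasDerivAt (fun w => ∮ ζ in C(c, R), ((ζ - w) ^ (n + 1))⁻¹ • f ζ)
      ((n + 1 : ℂ) • ∮ ζ in C(c, R), ((ζ - z) ^ (n + 2))⁻¹ • f ζ) z := by
  obtain ⟨ε, hε, hball⟩ := exists_forall_ball_le_norm_sub_of_notMem isClosed_sphere hz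
  have hζ (θ : ℝ) : circleMap c R θ ∈ sphere c |R| := circleMap_mem_sphere' c R θ
  have hne {w : ℂ} (hw : w ∈ ball z ε) {ζ : ℂ} (hζ : ζ ∈ sphere c |R|) : ζ - w ≠ 0 :=
    norm_pos_iff.1 (hε.trans_le (hball w hw ζ hζ))
  have hint {w : ℂ} (hw : w ∈ ball z ε) (a : ℂ) (m : ℕ) :
      CircleIntegrable (fun ζ => (a * ((ζ - w) ^ m)⁻¹) • f ζ) c R :=
    hf.continuousOn_smul <| continuousOn_const.mul <|
      ContinuousOn.inv₀ (by fun_prop) fun ζ hζ => pow_ne_zero m (hne hw hζ)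
  have hzε := mem_ball_self (x := z) hε
  simp only [circleIntegral, ← intervalIntegral.integral_smul]
  have hderiv := (intervalIntegral.hasDerivAt_integral_of_dominated_loc_of_deriv_le
    (μ := volume) (a := 0) (b := 2 * Real.pi) (x₀ := z)
    (F := fun w θ => deriv (circleMap c R) θ •
      (((circleMap c R θ - w) ^ (n + 1))⁻¹ • f (circleMap c R θ)))
    (F' := fun w θ => deriv (circleMap c R) θ •
      (((n + 1 : ℂ) * ((circleMap c R θ - w) ^ (n + 2))⁻¹) • f (circleMap c R θ)))
    (bound := fun θ => (n + 1) * (ε ^ (n + 2))⁻¹ *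
      ‖deriv (circleMap c R) θ • f (circleMap c R θ)‖) (ball_mem_nhds z hε)
    ?_ ?_ ?_ ?_ ?_ ?_).2
  · refine hderiv.congr_deriv (intervalIntegral.integral_congr fun θ _ => ?_)
    simp only [smul_comm (n + 1 : ℂ), smul_smul]
    ring_nf
  · filter_upwards [ball_mem_nhds z hε] with w hw
    simpa using (hint hw 1 (n + 1)).out.def'.aestronglyMeasurable
  · simpa using (hint hzε 1 (n + 1)).out
  · exact (hint hzε (n + 1) (n + 2)).out.def'.aestronglyMeasurable
  · refine .of_forall fun θ _ w hw => ?_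
    rw [smul_comm, norm_smul]
    gcongr
    rw [norm_mul, norm_inv, norm_pow, ← Nat.cast_succ, Complex.norm_natCast, Nat.cast_succ]
    gcongr
    exact hball w hw _ (hζ θ)
  · exact hf.out.norm.const_mul _
  · exact .of_forall fun θ _ w hw => ((hasDerivAt_inv_sub_pow (sub_ne_zero.1 (hne hw (hζ θ)))
      n).smul_const _).const_smul _

theorem hasDerivAt_iteratedDeriv_cauchyTypeIntegral (hf : CircleIntegrable f c R) (n : ℕ)
    (hz : z ∉ sphere c |R|) :
    HasDerivAt (iteratedDeriv n (fun w => ∮ ζ in C(c, R), (ζ - w)⁻¹ • f ζ))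
      (((n + 1)! : ℂ) • ∮ ζ in C(c, R), ((ζ - z) ^ (n + 2))⁻¹ • f ζ) z := by
  induction n generalizing z with
  | zero => simpa using hasDerivAt_cauchyTypeIntegral hf hz 0
  | succ n ih =>
    refine (((hasDerivAt_cauchyTypeIntegral hf hz (n + 1)).const_smul ((n + 1)! : ℂ)).congr_deriv
      ?_).congr_of_eventuallyEq ?_
    · rw [smul_smul, Nat.factorial_succ (n + 1)]
      push_cast
      rw [mul_comm]
    · refine Filter.eventually_of_mem (isClosed_sphere.isOpen_compl.mem_nhds hz) fun w hw => ?_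
      rw [iteratedDeriv_succ]
      exact (ih hw).deriv

end CauchyTypeIntegral

section BoundaryDensity

variable {f : ℂ → ℂ} {z : ℂ} {R : ℝ}

/-- The density of `f dζ̄` with respect to `dζ` on a circle `|ζ| = R`, on which
`dζ̄ = -(ζ̄ / ζ) dζ`. -/
noncomputable def conjDensity (f : ℂ → ℂ) (ζ : ℂ) : ℂ := -(conj ζ / ζ) * f ζ

theorem norm_conjDensity {ζ : ℂ} (hζ : ζ ≠ 0) : ‖conjDensity f ζ‖ = ‖f ζ‖ := by
  rw [conjDensity, norm_mul, norm_neg, norm_div, norm_conj, div_self (norm_ne_zero_iff.2 hζ),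
    one_mul]

theorem deriv_circleMap_mul_conjDensity (hR : R ≠ 0) (θ : ℝ) :
    deriv (circleMap 0 R) θ * conjDensity f (circleMap 0 R θ) =
      conj (deriv (circleMap 0 R) θ) * f (circleMap 0 R θ) := by
  have hζ : circleMap 0 R θ ≠ 0 := by simpa using hR
  rw [deriv_circleMap, conjDensity, map_mul, conj_I]
  field_simp

theorem circleIntegral_conjDensity (hR : R ≠ 0) :
    ∮ ζ in C(0, R), conjDensity f ζ = conj (∮ ζ in C(0, R), conj (f ζ)) := by
  simp only [circleIntegral, smul_eq_mul, deriv_circleMap_mul_conjDensity hR,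
    intervalIntegral.integral_of_le Real.two_pi_pos.le, ← integral_conj, map_mul, conj_conj]

theorem conj_sub_eq_div_of_mem_sphere {ζ : ℂ} (hζ : ζ ∈ sphere 0 R) (hζ0 : ζ ≠ 0) (z : ℂ) :
    conj (ζ - z) = (R ^ 2 - conj z * ζ) / ζ := by
  rw [eq_div_iff hζ0, map_sub, sub_mul, conj_mul', mem_sphere_zero_iff_norm.1 hζ]

theorem sq_sub_conj_mul_ne_zero {ζ : ℂ} (hz : z ∈ ball 0 R) (hζ : ζ ∈ closedBall 0 R) :
    (R : ℂ) ^ 2 - conj z * ζ ≠ 0 := by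
  rw [mem_ball_zero_iff] at hz
  rw [mem_closedBall_zero_iff] at hζ
  refine sub_ne_zero.2 fun h => ?_
  have h' := congrArg norm h
  rw [norm_mul, norm_conj, norm_pow, Complex.norm_real, Real.norm_eq_abs, sq_abs] at h'
  nlinarith [norm_nonneg z, norm_nonneg ζ]

/-- The conjugate of this integral is that of a function holomorphic on the disk, since
`ζ̄ = R² / ζ` on the circle. -/
theorem circleIntegral_conjDensity_conj_sub_pow_div (hz : z ∈ ball 0 R) (j m : ℕ) :
    ∮ ζ in C(0, R), conjDensity (fun ζ => conj (ζ - z) ^ j / (ζ - z) ^ m) ζ = 0 := by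
  have hR : 0 < R := pos_of_mem_ball hz
  have hconj : ∮ ζ in C(0, R), conj (conj (ζ - z) ^ j / (ζ - z) ^ m) =
      ∮ ζ in C(0, R), (ζ - z) ^ j * (ζ / (R ^ 2 - conj z * ζ)) ^ m := by
    refine circleIntegral.integral_congr hR.le fun ζ hζ => ?_
    have hζ0 : ζ ≠ 0 := ne_of_mem_sphere hζ hR.ne'
    simp only [map_div₀, map_pow, conj_conj]
    rw [conj_sub_eq_div_of_mem_sphere hζ hζ0, div_eq_mul_inv, ← inv_pow, inv_div]
  have hholo {ζ : ℂ} (hζ : ζ ∈ closedBall 0 R) : DifferentiableAt ℂ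
      (fun ζ => (ζ - z) ^ j * (ζ / (R ^ 2 - conj z * ζ)) ^ m) ζ := by
    have hne := sq_sub_conj_mul_ne_zero hz hζ
    fun_prop (disch := exact hne)
  rw [circleIntegral_conjDensity hR.ne', hconj,
    circleIntegral_eq_zero_of_differentiable_on_off_countable hR.le Set.countable_empty
      (fun ζ hζ => (hholo hζ).continuousAt.continuousWithinAt)
      fun ζ hζ => hholo (ball_subset_closedBall hζ.1), map_zero]

theorem Sb_eq_cauchyTypeIntegral (hR : R ≠ 0) (f : ℂ → ℂ) :
    Sb R f = fun z => ∮ ζ in C(0, R), (ζ - z)⁻¹ • ((2 * Real.pi * I)⁻¹ * conjDensity f ζ) := by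
  funext z
  rw [Sb, ← smul_eq_mul, ← intervalIntegral.integral_smul]
  refine intervalIntegral.integral_congr fun θ _ => ?_
  have hζ : R * exp (I * θ) = circleMap 0 R θ := by rw [circleMap_zero, mul_comm I]
  have hζ' : -I * R * exp (-I * θ) = conj (deriv (circleMap 0 R) θ) := by
    simp [deriv_circleMap, circleMap_zero, ← exp_conj]
    ring_nf
  simp only [hζ, hζ', smul_eq_mul]
  linear_combination (-(2 * Real.pi * I)⁻¹ * (circleMap 0 R θ - z)⁻¹) *
    deriv_circleMap_mul_conjDensity (f := f) hR θ

end BoundaryDensity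

section KernelEstimate

variable {R s : ℝ} {z : ℂ}

theorem half_add_le_norm_circleMap_sub {r t : ℝ} (hr : 0 ≤ r) (hrR : r ≤ R) (ht : |t| ≤ Real.pi) :
    (R - r + R / Real.pi * |t|) / 2 ≤ ‖circleMap 0 R t - r‖ := by
  have hR : 0 ≤ R := hr.trans hrR
  have hradial : R - r ≤ ‖circleMap 0 R t - r‖ := by
    simpa [abs_of_nonneg hR, abs_of_nonneg hr] using norm_sub_norm_le (circleMap 0 R t) r
  have hchord : 2 * (R / Real.pi * |t|) ≤ ‖circleMap 0 R t - R‖ := by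
    have hsin : 2 / Real.pi * |t / 2| ≤ |Real.sin (t / 2)| :=
      Real.mul_abs_le_abs_sin (by rw [abs_div, abs_two]; linarith)
    have hfactor : circleMap 0 R t - R = R * (exp (I * t) - 1) := by
      rw [circleMap_zero, mul_comm I]; ring
    rw [hfactor, norm_mul, Complex.norm_exp_I_mul_ofReal_sub_one, Complex.norm_real,
      Real.norm_of_nonneg hR, Real.norm_eq_abs, abs_mul, abs_two]
    rw [abs_div, abs_two] at hsin
    calc 2 * (R / Real.pi * |t|) = R * (2 * (2 / Real.pi * (|t| / 2))) := by ring
      _ ≤ _ := by gcongr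
  have htriangle : ‖circleMap 0 R t - R‖ ≤ ‖circleMap 0 R t - r‖ + (R - r) := by
    have h := norm_sub_le_norm_sub_add_norm_sub (circleMap 0 R t) (r : ℂ) R
    rwa [← Complex.ofReal_sub, Complex.norm_real, norm_sub_rev r,
      Real.norm_of_nonneg (sub_nonneg.2 hrR)] at h
  linarith

theorem integral_comp_norm_circleMap_sub (u : ℝ → ℝ) (R : ℝ) (z : ℂ) :
    ∫ θ in (0 : ℝ)..2 * Real.pi, u ‖circleMap 0 R θ - z‖ =
      ∫ θ in -Real.pi..Real.pi, u ‖circleMap 0 R θ - ‖z‖‖ := by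
  have hrotate (θ : ℝ) : ‖circleMap 0 R (θ + z.arg) - z‖ = ‖circleMap 0 R θ - ‖z‖‖ := by
    have hfactor : circleMap 0 R (θ + z.arg) - z = exp (z.arg * I) * (circleMap 0 R θ - ‖z‖) := by
      have hpolar := norm_mul_exp_arg_mul_I z
      simp only [circleMap_zero, Complex.ofReal_add, add_mul, exp_add]
      linear_combination hpolar
    rw [hfactor, norm_mul, norm_exp_ofReal_mul_I, one_mul]
  have hperiodic : Function.Periodic (fun θ => u ‖circleMap 0 R θ - z‖) (2 * Real.pi) := fun θ => by
    simp only [periodic_circleMap 0 R θ]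
  have hshift := hperiodic.intervalIntegral_add_eq 0 (-Real.pi + z.arg)
  rw [zero_add] at hshift
  rw [hshift, show -Real.pi + z.arg + 2 * Real.pi = Real.pi + z.arg by ring,
    ← intervalIntegral.integral_comp_add_right]
  simp only [hrotate]

theorem integral_add_mul_rpow_neg_le {δ c b : ℝ} (hδ : 0 < δ) (hc : 0 < c) (hs : 1 < s)
    (hb : 0 ≤ b) :
    ∫ t in (0 : ℝ)..b, (δ + c * t) ^ (-s) ≤ δ ^ (1 - s) / (c * (s - 1)) := by
  have hle : δ ≤ δ + c * b := le_add_of_nonneg_right (by positivity)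
  have hs' : 0 < s - 1 := sub_pos.2 hs
  rw [intervalIntegral.integral_comp_add_mul (fun x => x ^ (-s)) hc.ne', mul_zero, add_zero,
    integral_rpow (.inr ⟨by linarith, Set.notMem_uIcc_of_lt hδ (hδ.trans_le hle)⟩)]
  have hend : 0 ≤ (δ + c * b) ^ (-s + 1) := by positivity
  calc c⁻¹ • (((δ + c * b) ^ (-s + 1) - δ ^ (-s + 1)) / (-s + 1))
      = (δ ^ (1 - s) - (δ + c * b) ^ (-s + 1)) / (c * (s - 1)) := by
        rw [smul_eq_mul, show -s + 1 = -(s - 1) by ring, show 1 - s = -(s - 1) by ring]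
        field_simp
        ring
    _ ≤ δ ^ (1 - s) / (c * (s - 1)) := by gcongr; linarith

theorem continuous_add_mul_abs_rpow {δ c : ℝ} (hδ : 0 < δ) (hc : 0 ≤ c) (p : ℝ) :
    Continuous fun t : ℝ => (δ + c * |t|) ^ p :=
  Continuous.rpow_const (by fun_prop) fun t => .inl (by positivity)

theorem integral_add_mul_abs_rpow_neg_le {δ c b : ℝ} (hδ : 0 < δ) (hc : 0 < c) (hs : 1 < s)
    (hb : 0 ≤ b) :
    ∫ t in -b..b, (δ + c * |t|) ^ (-s) ≤ 2 * (δ ^ (1 - s) / (c * (s - 1))) := by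
  have hint (a a' : ℝ) := (continuous_add_mul_abs_rpow hδ hc.le (-s)).intervalIntegrable
    (μ := volume) a a'
  have hneg : ∫ t in -b..0, (δ + c * |t|) ^ (-s) = ∫ t in (0 : ℝ)..b, (δ + c * |t|) ^ (-s) := by
    simpa using (intervalIntegral.integral_comp_neg (a := 0) (b := b)
      fun t => (δ + c * |t|) ^ (-s)).symm
  have habs : ∫ t in (0 : ℝ)..b, (δ + c * |t|) ^ (-s) = ∫ t in (0 : ℝ)..b, (δ + c * t) ^ (-s) :=
    intervalIntegral.integral_congr fun t ht => by
      rw [Set.uIcc_of_le hb] at ht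
      simp only [abs_of_nonneg ht.1]
  rw [← intervalIntegral.integral_add_adjacent_intervals (hint _ 0) (hint 0 _), hneg, habs,
    ← two_mul]
  gcongr
  exact integral_add_mul_rpow_neg_le hδ hc hs hb

theorem continuous_norm_circleMap_sub_rpow (hz : z ∈ ball 0 R) (p : ℝ) :
    Continuous fun θ => ‖circleMap 0 R θ - z‖ ^ p :=
  Continuous.rpow_const (by fun_prop) fun θ =>
    .inl (norm_sub_pos_iff.2 (circleMap_ne_mem_ball hz θ)).ne'

theorem integral_norm_circleMap_sub_rpow_neg_le (hs : 1 < s) (hz : z ∈ ball 0 R) :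
    R * ∫ θ in (0 : ℝ)..2 * Real.pi, ‖circleMap 0 R θ - z‖ ^ (-s) ≤
      2 ^ (s + 1) * Real.pi / (s - 1) * (R - ‖z‖) ^ (1 - s) := by
  have hR : 0 < R := pos_of_mem_ball hz
  have hδ : 0 < R - ‖z‖ := sub_pos.2 (mem_ball_zero_iff.1 hz)
  have hc : 0 < R / Real.pi := by positivity
  have hz' : (‖z‖ : ℂ) ∈ ball 0 R := by simpa using hz
  have hpt (t : ℝ) (ht : t ∈ Set.Icc (-Real.pi) Real.pi) :
      ‖circleMap 0 R t - ‖z‖‖ ^ (-s) ≤ 2 ^ s * (R - ‖z‖ + R / Real.pi * |t|) ^ (-s) := by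
    have hle := half_add_le_norm_circleMap_sub (norm_nonneg z) (sub_pos.1 hδ).le (abs_le.2 ht)
    refine (Real.rpow_le_rpow_of_nonpos (by positivity) hle (by linarith)).trans_eq ?_
    rw [Real.div_rpow (by positivity) two_pos.le, Real.rpow_neg two_pos.le, div_inv_eq_mul,
      mul_comm]
  have hint : ∫ t in -Real.pi..Real.pi, ‖circleMap 0 R t - ‖z‖‖ ^ (-s) ≤
      ∫ t in -Real.pi..Real.pi, 2 ^ s * (R - ‖z‖ + R / Real.pi * |t|) ^ (-s) := by
    exact intervalIntegral.integral_mono_on (by linarith [Real.pi_pos])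
      ((continuous_norm_circleMap_sub_rpow hz' _).intervalIntegrable _ _)
      ((continuous_const.mul (continuous_add_mul_abs_rpow hδ hc.le _)).intervalIntegrable _ _) hpt
  rw [integral_comp_norm_circleMap_sub (· ^ (-s))]
  calc _ ≤ R * (2 ^ s * (2 * ((R - ‖z‖) ^ (1 - s) / (R / Real.pi * (s - 1))))) := by
        rw [intervalIntegral.integral_const_mul] at hint
        gcongr
        refine hint.trans ?_
        gcongr
        exact integral_add_mul_abs_rpow_neg_le hδ hc hs Real.pi_pos.le
    _ = _ := by
      rw [Real.rpow_add_one two_ne_zero]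
      have := (sub_pos.2 hs).ne'
      field_simp

theorem norm_circleIntegral_le_of_norm_le_rpow {E : Type*} [NormedAddCommGroup E] [NormedSpace ℂ E]
    {F : ℂ → E} {K : ℝ} (hs : 1 < s) (hK : 0 ≤ K) (hz : z ∈ ball 0 R)
    (hF : ∀ ζ ∈ sphere (0 : ℂ) R, ‖F ζ‖ ≤ K * ‖ζ - z‖ ^ (-s)) :
    ‖∮ ζ in C(0, R), F ζ‖ ≤ K * (2 ^ (s + 1) * Real.pi / (s - 1) * (R - ‖z‖) ^ (1 - s)) := by
  have hR : 0 ≤ R := (pos_of_mem_ball hz).le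
  have hint := ((continuous_norm_circleMap_sub_rpow hz (-s)).const_mul (R * K)).intervalIntegrable
    (μ := volume) 0 (2 * Real.pi)
  have hle (θ : ℝ) : ‖deriv (circleMap 0 R) θ • F (circleMap 0 R θ)‖ ≤
      R * K * ‖circleMap 0 R θ - z‖ ^ (-s) := by
    rw [norm_smul, deriv_circleMap, norm_mul, norm_I, mul_one, norm_circleMap_zero,
      abs_of_nonneg hR, mul_assoc]
    exact mul_le_mul_of_nonneg_left (hF _ (circleMap_mem_sphere 0 hR θ)) hR
  calc _ ≤ ∫ θ in (0 : ℝ)..2 * Real.pi, R * K * ‖circleMap 0 R θ - z‖ ^ (-s) :=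
        intervalIntegral.norm_integral_le_of_norm_le Real.two_pi_pos.le
          (.of_forall fun θ _ => hle θ) hint
    _ = K * (R * ∫ θ in (0 : ℝ)..2 * Real.pi, ‖circleMap 0 R θ - z‖ ^ (-s)) := by
        rw [intervalIntegral.integral_const_mul]; ring
    _ ≤ _ := mul_le_mul_of_nonneg_left (integral_norm_circleMap_sub_rpow_neg_le hs hz) hK

end KernelEstimate

section BoundaryOperator

variable {f : ℂ → ℂ} {z : ℂ} {R α M : ℝ} {k m : ℕ}

theorem continuousOn_conjDensity (hR : R ≠ 0) (hf : ContinuousOn f (sphere 0 R)) :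
    ContinuousOn (conjDensity f) (sphere 0 R) :=
  ((continuous_conj.continuousOn.div continuousOn_id fun _ hζ => ne_of_mem_sphere hζ hR).neg).mul hf

theorem circleIntegrable_inv_pow_smul_conjDensity (hz : z ∈ ball 0 R)
    (hf : ContinuousOn f (sphere 0 R)) (m : ℕ) :
    CircleIntegrable (fun ζ => ((ζ - z) ^ m)⁻¹ • conjDensity f ζ) 0 R := by
  have hR : 0 < R := pos_of_mem_ball hz
  have hne (ζ : ℂ) (hζ : ζ ∈ sphere 0 R) : (ζ - z) ^ m ≠ 0 :=
    pow_ne_zero _ (sub_ne_zero.2 (sphere_disjoint_ball.ne_of_mem hζ hz))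
  exact ((ContinuousOn.inv₀ (by fun_prop) hne).smul
    (continuousOn_conjDensity hR.ne' hf)).circleIntegrable hR.le

theorem inv_pow_smul_conjDensity_wirtingerPoly {ζ : ℂ} (hζ : ζ ≠ z) (hkm : k ≤ m)
    (c : ℕ → ℕ → ℂ) :
    ((ζ - z) ^ m)⁻¹ • conjDensity (fun ζ => wirtingerPoly k c (ζ - z)) ζ =
      ∑ l ∈ Finset.range (k + 1), ∑ p ∈ antidiagonal l, c p.1 p.2 / (p.1 ! * p.2 !) *
        conjDensity (fun ζ => conj (ζ - z) ^ p.2 / (ζ - z) ^ (m - p.1)) ζ := by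
  simp only [conjDensity, wirtingerPoly, Finset.mul_sum, smul_eq_mul]
  refine Finset.sum_congr rfl fun l hl => Finset.sum_congr rfl fun p hp => ?_
  rw [Finset.mem_range] at hl
  rw [Finset.HasAntidiagonal.mem_antidiagonal] at hp
  rw [pow_sub₀ _ (sub_ne_zero.2 hζ) (by omega : p.1 ≤ m)]
  simp only [div_eq_mul_inv, mul_inv, inv_inv]
  ring

theorem circleIntegral_inv_pow_smul_conjDensity_wirtingerPoly (hz : z ∈ ball 0 R) (hkm : k ≤ m)
    (c : ℕ → ℕ → ℂ) :
    ∮ ζ in C(0, R), ((ζ - z) ^ m)⁻¹ • conjDensity (fun ζ => wirtingerPoly k c (ζ - z)) ζ = 0 := by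
  have hR : 0 < R := pos_of_mem_ball hz
  have hne {ζ : ℂ} (hζ : ζ ∈ sphere 0 R) : ζ ≠ z := sphere_disjoint_ball.ne_of_mem hζ hz
  have hint (p : ℕ × ℕ) : CircleIntegrable (fun ζ => c p.1 p.2 / (p.1 ! * p.2 !) *
      conjDensity (fun ζ => conj (ζ - z) ^ p.2 / (ζ - z) ^ (m - p.1)) ζ) 0 R :=
    (continuousOn_const.mul (continuousOn_conjDensity hR.ne' (ContinuousOn.div (by fun_prop)
      (by fun_prop) fun ζ hζ => pow_ne_zero _ (sub_ne_zero.2 (hne hζ))))).circleIntegrable hR.le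
  rw [circleIntegral.integral_congr hR.le
      fun ζ hζ => inv_pow_smul_conjDensity_wirtingerPoly (hne hζ) hkm c,
    circleIntegral.integral_fun_sum fun l _ => CircleIntegrable.fun_sum _ fun p _ => hint p]
  refine Finset.sum_eq_zero fun l _ => ?_
  rw [circleIntegral.integral_fun_sum fun p _ => hint p]
  refine Finset.sum_eq_zero fun p _ => ?_
  rw [circleIntegral.integral_const_mul, circleIntegral_conjDensity_conj_sub_pow_div hz, mul_zero]

theorem continuous_wirtingerPoly (k : ℕ) (c : ℕ → ℕ → ℂ) : Continuous (wirtingerPoly k c) := by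
  unfold wirtingerPoly
  fun_prop

theorem circleIntegral_inv_pow_smul_conjDensity_taylorRemainder (hz : z ∈ ball 0 R) (hkm : k ≤ m)
    (hf : ContinuousOn f (sphere 0 R)) :
    ∮ ζ in C(0, R), ((ζ - z) ^ m)⁻¹ • conjDensity (taylorRemainder k f z) ζ =
      ∮ ζ in C(0, R), ((ζ - z) ^ m)⁻¹ • conjDensity f ζ := by
  have hpoly : Continuous fun ζ => wirtingerPoly k (fun i j => wDij i j f z) (ζ - z) :=
    (continuous_wirtingerPoly k _).comp (by fun_prop)
  have hsub (ζ : ℂ) : conjDensity (taylorRemainder k f z) ζ = conjDensity f ζ -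
      conjDensity (fun ζ => wirtingerPoly k (fun i j => wDij i j f z) (ζ - z)) ζ := mul_sub _ _ _
  simp only [hsub, smul_sub]
  rw [circleIntegral.integral_sub (circleIntegrable_inv_pow_smul_conjDensity hz hf m)
    (circleIntegrable_inv_pow_smul_conjDensity hz hpoly.continuousOn m)]
  exact sub_eq_self.2 (circleIntegral_inv_pow_smul_conjDensity_wirtingerPoly hz hkm _)

theorem norm_circleIntegral_inv_pow_smul_conjDensity_le (hα : α < 1) (hM : 0 ≤ M)
    (hz : z ∈ ball 0 R) (hf : ContinuousOn f (sphere 0 R))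
    (hrem : ∀ ζ ∈ sphere 0 R, ‖taylorRemainder k f z ζ‖ ≤ M * ‖ζ - z‖ ^ k * ‖ζ - z‖ ^ α) :
    ‖∮ ζ in C(0, R), ((ζ - z) ^ (k + 2))⁻¹ • conjDensity f ζ‖ ≤
      M * (2 ^ (3 - α) * Real.pi / (1 - α) * (R - ‖z‖) ^ (α - 1)) := by
  rw [← circleIntegral_inv_pow_smul_conjDensity_taylorRemainder hz (Nat.le_add_right k 2) hf]
  have hbound (ζ : ℂ) (hζ : ζ ∈ sphere 0 R) :
      ‖((ζ - z) ^ (k + 2))⁻¹ • conjDensity (taylorRemainder k f z) ζ‖ ≤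
        M * ‖ζ - z‖ ^ (-(2 - α)) := by
    have hpos : 0 < ‖ζ - z‖ :=
      norm_sub_pos_iff.2 (sphere_disjoint_ball.ne_of_mem hζ hz)
    rw [norm_smul, norm_conjDensity (ne_of_mem_sphere hζ (pos_of_mem_ball hz).ne'), norm_inv,
      norm_pow, inv_mul_le_iff₀ (by positivity)]
    refine (hrem ζ hζ).trans_eq ?_
    rw [neg_sub, Real.rpow_sub hpos, Real.rpow_two]
    field_simp
    ring
  have h := norm_circleIntegral_le_of_norm_le_rpow (s := 2 - α) (by linarith) hM hz hbound
  rwa [show 2 - α + 1 = 3 - α by ring, show 2 - α - 1 = 1 - α by ring,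
    show 1 - (2 - α) = α - 1 by ring] at h

theorem hasDerivAt_iteratedDeriv_Sb (hf : ContinuousOn f (sphere 0 R)) (hz : z ∈ ball 0 R)
    (n : ℕ) :
    HasDerivAt (iteratedDeriv n (Sb R f)) ((n + 1)! / (2 * Real.pi * I) *
      ∮ ζ in C(0, R), ((ζ - z) ^ (n + 2))⁻¹ • conjDensity f ζ) z := by
  have hR : 0 < R := pos_of_mem_ball hz
  have hint : CircleIntegrable (fun ζ => (2 * Real.pi * I)⁻¹ * conjDensity f ζ) 0 R :=
    (continuousOn_const.mul (continuousOn_conjDensity hR.ne' hf)).circleIntegrable hR.le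
  have hz' : z ∉ sphere 0 |R| := fun h =>
    sphere_disjoint_ball.ne_of_mem (abs_of_pos hR ▸ h) hz rfl
  rw [Sb_eq_cauchyTypeIntegral hR.ne']
  refine (hasDerivAt_iteratedDeriv_cauchyTypeIntegral hint n hz').congr_deriv ?_
  simp only [smul_eq_mul, mul_left_comm _ (2 * Real.pi * I : ℂ)⁻¹]
  rw [circleIntegral.integral_const_mul]
  ring

theorem norm_iteratedDeriv_Sb_sub_le {U : Set ℂ} {x y : ℂ} (hα : α ∈ Set.Ioo 0 1) (hM : 0 ≤ M)
    (hU : IsOpen U) (hRU : closedBall 0 R ⊆ U) (hf : ContDiffOn ℝ k f U)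
    (hhol : ∀ i j, i + j = k → ∀ x ∈ closedBall 0 R, ∀ y ∈ closedBall 0 R,
      ‖wDij i j f x - wDij i j f y‖ ≤ M * ‖x - y‖ ^ α)
    (hx : x ∈ ball 0 R) (hy : y ∈ ball 0 R) :
    ‖iteratedDeriv k (Sb R f) x - iteratedDeriv k (Sb R f) y‖ ≤
      (k + 1)! * 2 ^ k * 2 ^ (2 - α) / (1 - α) * (2 / α + 2) * M * ‖x - y‖ ^ α := by
  have hα' : 0 < 1 - α := sub_pos.2 hα.2
  have hcont : ContinuousOn f (sphere 0 R) :=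
    hf.continuousOn.mono (sphere_subset_closedBall.trans hRU)
  have hderiv (z : ℂ) (hz : z ∈ ball 0 R) :=
    (hasDerivAt_iteratedDeriv_Sb hcont hz k).hasFDerivAt.restrictScalars ℝ
  have hrem (z : ℂ) (hz : z ∈ ball 0 R) (ζ : ℂ) (hζ : ζ ∈ sphere 0 R) :
      ‖taylorRemainder k f z ζ‖ ≤ 2 ^ k * M * ‖ζ - z‖ ^ k * ‖ζ - z‖ ^ α :=
    norm_taylorRemainder_le hα.1.le hM hU hRU
      ((convex_closedBall 0 R).starConvex (ball_subset_closedBall hz)) hf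
      (fun i j hij x hx => hhol i j hij x hx z (ball_subset_closedBall hz))
      (sphere_subset_closedBall hζ)
  refine (norm_sub_le_of_norm_fderiv_le_rpow hα.1 hα.2.le
    (A := (k + 1)! * 2 ^ k * 2 ^ (2 - α) / (1 - α) * M) (by positivity) hderiv
    (fun z hz => ?_) hx hy).trans_eq (by ring)
  have hint := norm_circleIntegral_inv_pow_smul_conjDensity_le hα.2 (by positivity) hz hcont
    (hrem z hz)
  rw [ContinuousLinearMap.norm_restrictScalars, ContinuousLinearMap.norm_toSpanSingleton]
  calc _ = (k + 1)! / (2 * Real.pi) *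
        ‖∮ ζ in C(0, R), ((ζ - z) ^ (k + 2))⁻¹ • conjDensity f ζ‖ := by
        simp [abs_of_pos Real.pi_pos]
    _ ≤ (k + 1)! / (2 * Real.pi) *
        (2 ^ k * M * (2 ^ (3 - α) * Real.pi / (1 - α) * (R - ‖z‖) ^ (α - 1))) := by gcongr
    _ = _ := by
        rw [show 3 - α = 2 - α + 1 by ring, Real.rpow_add_one two_ne_zero]
        field_simp

end BoundaryOperator

/-- `H_α[∂^k S_b f] ≤ C Σ_{i+j=k} H_α[∂^i∂̄^j f]`, the left-hand
Hölder constant being taken over the open disk. -/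
theorem Sb_deriv_holder_bound (k : ℕ) (α : ℝ) (hα : α ∈ Set.Ioo (0:ℝ) 1) :
    ∃ C : ℝ, 0 < C ∧ ∀ R : ℝ, 0 < R → ∀ f : ℂ → ℂ, CkHolder k α R f →
      Hol α (ball (0:ℂ) R) (iteratedDeriv k (Sb R f)) ≤
        ENNReal.ofReal C *
          ∑ p ∈ Finset.HasAntidiagonal.antidiagonal k, Hol α (closedBall (0:ℂ) R) (wDij p.1 p.2 f) := by
  have hα' : 0 < 1 - α := sub_pos.2 hα.2
  have hαpos := hα.1
  have hC : 0 < (k + 1)! * 2 ^ k * 2 ^ (2 - α) / (1 - α) * (2 / α + 2) := by positivity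
  refine ⟨_, hC, fun R _ f ⟨⟨U, hU, hRU, hf⟩, hfin⟩ => ?_⟩
  set H := fun p : ℕ × ℕ => Hol α (closedBall (0 : ℂ) R) (wDij p.1 p.2 f)
  have hsum : ∑ p ∈ antidiagonal k, H p ≠ ⊤ :=
    ENNReal.sum_ne_top.2 fun p hp => (hfin _ _ (Finset.HasAntidiagonal.mem_antidiagonal.1 hp)).ne
  have hle (i j : ℕ) (hij : i + j = k) :
      H (i, j) ≤ ENNReal.ofReal (∑ p ∈ antidiagonal k, H p).toReal := by
    rw [ENNReal.ofReal_toReal hsum]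
    exact Finset.single_le_sum_of_canonicallyOrdered (f := H)
      (Finset.HasAntidiagonal.mem_antidiagonal.2 hij)
  rw [← ENNReal.ofReal_toReal hsum, ← ENNReal.ofReal_mul hC.le,
    Hol_le_ofReal_iff hα.1 (by positivity)]
  exact fun x hx y hy => norm_iteratedDeriv_Sb_sub_le hα ENNReal.toReal_nonneg hU hRU hf
    (fun i j hij => (Hol_le_ofReal_iff hα.1 ENNReal.toReal_nonneg).1 (hle i j hij)) hx hy
end
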